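/- arXiv:2511.03358 — 2 statements merged into one kernel-verified Lean document; each statement's English description precedes it below -/
import Mathlib

section
/- Fix a > 0, θ > 0, σa > 0, σm > 0 and ν ∈ [0,1]. Then the equation F(ν,σa,σm,a,θ)[μ] = 0 has either exactly one solution (namely μ = 0) or exactly three solutions; it has exactly three solutions if and only if F'_μ[0] > 0, and exactly one solution if and only if F'_μ[0] ≤ 0. -/
open MeasureTheory Real Set Filter

/-- Unnormalised stationary density ρ0[μ](x) of the McKean–Vlasov SDE
`dX = (aX − X³ − θ(X − m₁))dt + σa dB¹ + σm X ∘_ν dB²`. -/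
noncomputable def rho0 (ν σa σm a θ μ x : ℝ) : ℝ :=
  Real.exp (((a - θ - ν * σm ^ 2 + σa ^ 2 / σm ^ 2) / σm ^ 2) *
      Real.log (1 + (σm ^ 2 / σa ^ 2) * x ^ 2) +
    (2 * θ * μ / (σa * σm)) * Real.arctan (σm * x / σa) - x ^ 2 / σm ^ 2)

/-- Normalisation constant Z[μ] = ∫ ρ0[μ]. -/
noncomputable def Z (ν σa σm a θ μ : ℝ) : ℝ := ∫ x : ℝ, rho0 ν σa σm a θ μ x

/-- Self-consistency function F(ν,σa,σm,a,θ)[μ] = (∫ (x−μ)·ρ0[μ]) / Z[μ]. -/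
noncomputable def F (ν σa σm a θ μ : ℝ) : ℝ :=
  (∫ x : ℝ, (x - μ) * rho0 ν σa σm a θ μ x) / Z ν σa σm a θ μ

/-- F'_μ[0] : the derivative at μ = 0 of μ ↦ F(ν,σa,σm,a,θ)[μ]. -/
noncomputable def Fmu' (ν σa σm a θ : ℝ) : ℝ := deriv (fun μ => F ν σa σm a θ μ) 0

/-!
The function `rho0 ν σa σm a θ μ` is the exponential tilt of the even weight `rho0 ν σa σm a θ 0`
by an odd, bounded, increasing function `φ`, with parameter `c * μ`, `c = 2 * θ / σa ^ 2`.
Integrating the zero-flux equation for the stationary density gives `θ * F μ * Z μ = K (c * μ)`,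
where `K t = ∫ g * exp (t * φ)` and `g x = (b * x - x ^ 3) * rho0 ν σa σm a θ 0 x` with
`b = a + (1 - ν) * σm ^ 2`.

`K` is odd and entire, with Taylor coefficients `M k / (2 * k + 1)!`, `M k = ∫ g * φ ^ (2 * k + 1)`.
Since `g * φ` changes sign exactly where `φ ^ 2` crosses `Q = φ √b ^ 2`, comparing `φ ^ 2` with `Q`
gives `M (k + 1) ≤ Q * M k + Q ^ k * B` for a constant `B < 0`. Hence some `M k` is negative and the
sequence changes sign at most once. By Descartes' rule of signs, `K` has exactly one positive
zero if `M 0 > 0` and none otherwise, and `M 0` is a positive multiple of `F'(0)`.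
-/

section PowerSeries

open scoped ENNReal in
lemma hasFPowerSeriesOnBall_ofScalars_of_forall_hasSum {𝕜 : Type*} [NontriviallyNormedField 𝕜]
    {a : ℕ → 𝕜} {f : 𝕜 → 𝕜} (hf : ∀ z, HasSum (fun n => a n * z ^ n) (f z)) :
    HasFPowerSeriesOnBall f (.ofScalars 𝕜 a) 0 ∞ where
  r_le := by
    refine ENNReal.le_of_forall_nnreal_lt fun r _ => ?_
    obtain ⟨z, hz⟩ := NormedField.exists_lt_norm 𝕜 r
    obtain ⟨C, hC⟩ := (hf z).summable.tendsto_atTop_zero.norm.bddAbove_range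
    refine FormalMultilinearSeries.le_radius_of_bound _ C fun n => ?_
    rw [FormalMultilinearSeries.ofScalars_norm]
    calc ‖a n‖ * (r : ℝ) ^ n ≤ ‖a n‖ * ‖z‖ ^ n := by gcongr
      _ = ‖a n * z ^ n‖ := by rw [norm_mul, norm_pow]
      _ ≤ C := hC ⟨n, rfl⟩
  r_pos := ENNReal.zero_lt_top
  hasSum {z} _ := by
    simpa only [FormalMultilinearSeries.ofScalars_apply_eq, smul_eq_mul, zero_add] using hf z

lemma continuous_of_forall_hasSum_mul_pow {𝕜 : Type*} [NontriviallyNormedField 𝕜]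
    {a : ℕ → 𝕜} {f : 𝕜 → 𝕜} (hf : ∀ z, HasSum (fun n => a n * z ^ n) (f z)) :
    Continuous f := by
  simpa using (hasFPowerSeriesOnBall_ofScalars_of_forall_hasSum hf).continuousOn

lemma hasDerivAt_zero_of_forall_hasSum_mul_pow {𝕜 : Type*} [NontriviallyNormedField 𝕜]
    {a : ℕ → 𝕜} {f : 𝕜 → 𝕜} (hf : ∀ z, HasSum (fun n => a n * z ^ n) (f z)) :
    HasDerivAt f (a 1) 0 := by
  simpa using (hasFPowerSeriesOnBall_ofScalars_of_forall_hasSum hf).hasFPowerSeriesAt.hasDerivAt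

variable {a : ℕ → ℝ} {f : ℝ → ℝ} {N : ℕ}

lemma pow_mul_le_of_one_sign_change (hf : ∀ t, HasSum (fun n => a n * t ^ n) (f t))
    (hpos : ∀ n < N, 0 ≤ a n) (hneg : ∀ n > N, a n ≤ 0) {t s : ℝ} (ht : 0 ≤ t) (hts : t ≤ s)
    (m : ℕ) : t ^ N * f s ≤ s ^ N * f t + a m * (t ^ N * s ^ m - s ^ N * t ^ m) := by
  have hs : 0 ≤ s := ht.trans hts
  have pow_le {i j : ℕ} (hij : i ≤ j) : t ^ j * s ^ i ≤ s ^ j * t ^ i := by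
    obtain ⟨k, rfl⟩ := Nat.exists_eq_add_of_le hij
    calc t ^ (i + k) * s ^ i = (t * s) ^ i * t ^ k := by ring
      _ ≤ (t * s) ^ i * s ^ k := by gcongr
      _ = s ^ (i + k) * t ^ i := by ring
  have term_nonpos (n : ℕ) : a n * (t ^ N * s ^ n - s ^ N * t ^ n) ≤ 0 := by
    rcases lt_trichotomy n N with h | rfl | h
    · exact mul_nonpos_of_nonneg_of_nonpos (hpos n h) (by linarith [pow_le h.le])
    · simp [mul_comm]
    · exact mul_nonpos_of_nonpos_of_nonneg (hneg n h) (by linarith [pow_le h.le])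
  have hsum : HasSum (fun n => -(a n * (t ^ N * s ^ n - s ^ N * t ^ n)))
      (s ^ N * f t - t ^ N * f s) := by
    refine (((hf t).mul_left (s ^ N)).sub ((hf s).mul_left (t ^ N))).congr_fun fun n => ?_
    ring
  linarith [le_hasSum hsum m fun n _ => neg_nonneg.2 (term_nonpos n)]

lemma exists_pos_of_one_sign_change (hf : ∀ t, HasSum (fun n => a n * t ^ n) (f t))
    (hpos : ∀ n < N, 0 ≤ a n) (hneg : ∀ n > N, a n ≤ 0) {j : ℕ} (hj : j < N) (haj : 0 < a j) :
    ∃ t, 0 < t ∧ 0 < f t := by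
  have hcont : ContinuousWithinAt (fun t => t ^ (N - j) * (f 1 - a j) + a j) (Ioi 0) 0 := by
    fun_prop
  have hlead_zero : 0 < 0 ^ (N - j) * (f 1 - a j) + a j := by
    simpa [zero_pow (Nat.sub_ne_zero_of_lt hj)] using haj
  obtain ⟨t, hlead, ht0, ht1⟩ := ((hcont.eventually (lt_mem_nhds hlead_zero)).and
    (Ioc_mem_nhdsGT one_pos)).exists
  refine ⟨t, ht0, (mul_pos (pow_pos ht0 j) hlead).trans_le ?_⟩
  have hpivot := pow_mul_le_of_one_sign_change hf hpos hneg ht0.le ht1 j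
  have hsplit : t ^ N = t ^ j * t ^ (N - j) := by rw [← pow_add, Nat.add_sub_cancel' hj.le]
  simp only [one_pow, one_mul, mul_one, hsplit] at hpivot
  linarith

lemma exists_gt_neg_of_one_sign_change (hf : ∀ t, HasSum (fun n => a n * t ^ n) (f t))
    (hpos : ∀ n < N, 0 ≤ a n) (hneg : ∀ n > N, a n ≤ 0) {m : ℕ} (hm : N < m) (ham : a m < 0)
    (r : ℝ) : ∃ t > r, f t < 0 := by
  have hlim : Tendsto (fun t => t ^ (m - N) * a m + (f 1 - a m)) atTop atBot :=
    tendsto_atBot_add_const_right _ _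
      ((tendsto_pow_atTop (Nat.sub_ne_zero_of_lt hm)).atTop_mul_const_of_neg ham)
  obtain ⟨t, hlead, ht⟩ := ((hlim.eventually_lt_atBot 0).and
    (eventually_gt_atTop (max r 1))).exists
  obtain ⟨hrt, ht1⟩ := max_lt_iff.1 ht
  refine ⟨t, hrt, lt_of_le_of_lt ?_ (mul_neg_of_pos_of_neg (pow_pos (one_pos.trans ht1) N) hlead)⟩
  have hpivot := pow_mul_le_of_one_sign_change hf hpos hneg zero_le_one ht1.le m
  have hsplit : t ^ m = t ^ N * t ^ (m - N) := by rw [← pow_add, Nat.add_sub_cancel' hm.le]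
  simp only [one_pow, one_mul, mul_one, hsplit] at hpivot
  linarith

-- Descartes' rule of signs, for entire series.
theorem existsUnique_pos_zero_of_one_sign_change (hf : ∀ t, HasSum (fun n => a n * t ^ n) (f t))
    (hpos : ∀ n < N, 0 ≤ a n) (hneg : ∀ n > N, a n ≤ 0) {j m : ℕ} (hj : j < N) (haj : 0 < a j)
    (hm : N < m) (ham : a m < 0) : ∃! t, 0 < t ∧ f t = 0 := by
  obtain ⟨s, hs, hfs⟩ := exists_pos_of_one_sign_change hf hpos hneg hj haj
  obtain ⟨t, hst, hft⟩ := exists_gt_neg_of_one_sign_change hf hpos hneg hm ham s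
  obtain ⟨z, hz, hfz⟩ := intermediate_value_Icc' hst.le
    (continuous_of_forall_hasSum_mul_pow hf).continuousOn ⟨hft.le, hfs.le⟩
  have not_two_zeros {x y : ℝ} (hx : 0 < x) (hxy : x < y) (hfx : f x = 0) (hfy : f y = 0) :
      False := by
    have hpivot := pow_mul_le_of_one_sign_change hf hpos hneg hx.le hxy.le m
    have hlt : y ^ N * x ^ m < x ^ N * y ^ m := by
      have hy : 0 < y := hx.trans hxy
      obtain ⟨k, rfl⟩ := Nat.exists_eq_add_of_lt hm
      calc y ^ N * x ^ (N + k + 1) = (x * y) ^ N * x ^ (k + 1) := by ring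
        _ < (x * y) ^ N * y ^ (k + 1) := by gcongr
        _ = x ^ N * y ^ (N + k + 1) := by ring
    rw [hfx, hfy, mul_zero, mul_zero, zero_add] at hpivot
    linarith [mul_neg_of_neg_of_pos ham (sub_pos.2 hlt)]
  refine ⟨z, ⟨hs.trans_le hz.1, hfz⟩, fun y ⟨hy, hfy⟩ => ?_⟩
  rcases lt_trichotomy y z with h | h | h
  · exact (not_two_zeros hy h hfy hfz).elim
  · exact h
  · exact (not_two_zeros (hs.trans_le hz.1) h hfz hfy).elim

lemma neg_of_forall_coeff_nonpos (hf : ∀ t, HasSum (fun n => a n * t ^ n) (f t))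
    (ha : ∀ n, a n ≤ 0) {m : ℕ} (ham : a m < 0) {t : ℝ} (ht : 0 < t) : f t < 0 := by
  have hterm := le_hasSum (hf t).neg m fun n _ =>
    neg_nonneg.2 (mul_nonpos_of_nonpos_of_nonneg (ha n) (by positivity))
  linarith [mul_neg_of_neg_of_pos ham (pow_pos ht m)]

lemma odd_of_forall_even_coeff_eq_zero (hf : ∀ t, HasSum (fun n => a n * t ^ n) (f t))
    (ha : ∀ k, a (2 * k) = 0) : f.Odd := by
  intro t
  refine (hf (-t)).unique ((hf t).neg.congr_fun fun n => ?_)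
  rcases n.even_or_odd with hn | hn
  · obtain ⟨k, rfl⟩ := hn.exists_two_nsmul
    simp [ha]
  · rw [hn.neg_pow, mul_neg]

end PowerSeries

section ZeroSets

variable {f : ℝ → ℝ}

lemma zeros_eq_singleton_of_odd_of_neg (hodd : f.Odd) (hneg : ∀ t, 0 < t → f t < 0) :
    {t | f t = 0} = {0} := by
  refine eq_singleton_iff_unique_mem.2 ⟨hodd.map_zero, fun t (ht : f t = 0) => ?_⟩
  by_contra hne
  rcases lt_or_gt_of_ne hne with h | h
  · exact (hneg (-t) (neg_pos.2 h)).ne (by rw [hodd, ht, neg_zero])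
  · exact (hneg t h).ne ht

lemma ncard_zeros_eq_three_of_odd (hodd : f.Odd) (huniq : ∃! t, 0 < t ∧ f t = 0) :
    {t | f t = 0}.ncard = 3 := by
  obtain ⟨z, ⟨hz, hfz⟩, huniq⟩ := huniq
  refine ncard_eq_three.2 ⟨0, z, -z, hz.ne, (neg_ne_zero.2 hz.ne').symm, by linarith, ?_⟩
  ext t
  simp only [mem_ofPred_eq, mem_insert_iff, mem_singleton_iff]
  constructor
  · intro ht
    rcases lt_trichotomy t 0 with h | h | h
    · exact .inr (.inr (neg_eq_iff_eq_neg.1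
        (huniq (-t) ⟨neg_pos.2 h, by rw [hodd, ht, neg_zero]⟩)))
    · exact .inl h
    · exact .inr (.inl (huniq t ⟨h, ht⟩))
  · rintro (rfl | rfl | rfl)
    · exact hodd.map_zero
    · exact hfz
    · rw [hodd, hfz, neg_zero]

end ZeroSets

section Tilt

variable {α : Type*} {mα : MeasurableSpace α} {m : Measure α} {h φ : α → ℝ} {C : ℝ}

/-- The integral of `h` against the exponential tilt of `m` by `t * φ`; for `h = 1` this is the
moment generating function of `φ`, but here `h` may change sign. -/
noncomputable def tiltIntegral (m : Measure α) (h φ : α → ℝ) (t : ℝ) : ℝ :=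
  ∫ x, h x * exp (t * φ x) ∂m

lemma integrable_mul_pow_of_bounded (hh : Integrable h m) (hφ : AEStronglyMeasurable φ m)
    (hC : ∀ x, |φ x| ≤ C) (n : ℕ) : Integrable (fun x => h x * φ x ^ n) m := by
  refine hh.mul_bdd (c := C ^ n) (hφ.pow n) (.of_forall fun x => ?_)
  rw [norm_pow]
  exact pow_le_pow_left₀ (norm_nonneg _) (hC x) n

lemma integrable_mul_exp_of_bounded (hh : Integrable h m) (hφ : AEStronglyMeasurable φ m)
    (hC : ∀ x, |φ x| ≤ C) (t : ℝ) : Integrable (fun x => h x * exp (t * φ x)) m := by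
  refine hh.mul_bdd (c := exp (|t| * C))
    (continuous_exp.comp_aestronglyMeasurable (hφ.const_mul t)) (.of_forall fun x => ?_)
  rw [norm_eq_abs, abs_exp, exp_le_exp]
  calc t * φ x ≤ |t| * |φ x| := (le_abs_self _).trans (abs_mul _ _).le
    _ ≤ |t| * C := by gcongr; exact hC x

lemma hasSum_tiltIntegral (hh : Integrable h m) (hφ : AEStronglyMeasurable φ m)
    (hC : ∀ x, |φ x| ≤ C) (t : ℝ) :
    HasSum (fun n => (∫ x, h x * φ x ^ n ∂m) / n.factorial * t ^ n) (tiltIntegral m h φ t) := by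
  have hasSum_exp (y : ℝ) : HasSum (fun n : ℕ => y ^ n / n.factorial) (exp y) := by
    rw [exp_eq_exp_ℝ]; exact NormedSpace.expSeries_div_hasSum_exp y
  have hmeas (n : ℕ) : AEStronglyMeasurable (fun x => h x * ((t * φ x) ^ n / n.factorial)) m := by
    simp only [div_eq_mul_inv]
    exact hh.aestronglyMeasurable.mul (((hφ.const_mul t).pow n).mul_const _)
  have hbound (n : ℕ) (x : α) :
      ‖h x * ((t * φ x) ^ n / n.factorial)‖ ≤ |h x| * ((|t| * C) ^ n / n.factorial) := by
    rw [norm_mul, norm_div, norm_pow, norm_mul, norm_natCast]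
    simp only [norm_eq_abs]
    gcongr
    exact hC x
  have hdom (x : α) : HasSum (fun n : ℕ => |h x| * ((|t| * C) ^ n / n.factorial))
      (|h x| * exp (|t| * C)) := (hasSum_exp _).mul_left _
  have hsum : HasSum (fun n => ∫ x, h x * ((t * φ x) ^ n / n.factorial) ∂m)
      (tiltIntegral m h φ t) :=
    hasSum_integral_of_dominated_convergence _ hmeas
      (fun n => .of_forall (hbound n)) (.of_forall fun x => (hdom x).summable)
      (by simpa only [(hdom _).tsum_eq] using hh.abs.mul_const _)
      (.of_forall fun x => (hasSum_exp (t * φ x)).mul_left (h x))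
  refine hsum.congr_fun fun n => ?_
  rw [← integral_div, ← integral_mul_const]
  exact integral_congr_ae (.of_forall fun x => by ring)

lemma hasDerivAt_tiltIntegral_zero (hh : Integrable h m) (hφ : AEStronglyMeasurable φ m)
    (hC : ∀ x, |φ x| ≤ C) : HasDerivAt (tiltIntegral m h φ) (∫ x, h x * φ x ∂m) 0 := by
  simpa using hasDerivAt_zero_of_forall_hasSum_mul_pow (hasSum_tiltIntegral hh hφ hC)

end Tilt

section SingleCrossing

variable {M : ℕ → ℝ} {Q B : ℝ}

lemma nonpos_of_succ_le_of_nonpos (hQ : 0 ≤ Q) (hB : B ≤ 0)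
    (hM : ∀ k, M (k + 1) ≤ Q * M k + Q ^ k * B) {k l : ℕ} (hkl : k ≤ l) (hk : M k ≤ 0) :
    M l ≤ 0 := by
  induction l, hkl using Nat.le_induction with
  | base => exact hk
  | succ l _ ih =>
    linarith [hM l, mul_nonpos_of_nonneg_of_nonpos hQ ih,
      mul_nonpos_of_nonneg_of_nonpos (pow_nonneg hQ l) hB]

lemma exists_neg_of_succ_le (hQ : 0 ≤ Q) (hB : B < 0)
    (hM : ∀ k, M (k + 1) ≤ Q * M k + Q ^ k * B) : ∃ k, M k < 0 := by
  rcases hQ.eq_or_lt with rfl | hQ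
  · exact ⟨1, (hM 0).trans_lt (by simpa using hB)⟩
  have hlin (k : ℕ) : Q * M k ≤ Q ^ k * (Q * M 0 + k * B) := by
    induction k with
    | zero => simp
    | succ k ih =>
      calc Q * M (k + 1) ≤ Q * (Q * M k + Q ^ k * B) := by gcongr; exact hM k
        _ ≤ Q * (Q ^ k * (Q * M 0 + k * B) + Q ^ k * B) := by gcongr
        _ = Q ^ (k + 1) * (Q * M 0 + (k + 1 : ℕ) * B) := by push_cast; ring
  obtain ⟨k, hk⟩ := exists_nat_gt (Q * M 0 / -B)
  rw [div_lt_iff₀ (neg_pos.2 hB)] at hk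
  exact ⟨k, neg_of_mul_neg_right ((hlin k).trans_lt
    (mul_neg_of_pos_of_neg (pow_pos hQ k) (by linarith))) hQ.le⟩

variable {α : Type*} {mα : MeasurableSpace α} {m : Measure α} {g φ : α → ℝ} {C : ℝ}

/-- The odd moments of `φ` against the signed measure `g • m`: up to factorials, the Taylor
coefficients of `tiltIntegral m g φ` at `0` when the even moments vanish. -/
noncomputable def oddMoment (m : Measure α) (g φ : α → ℝ) (k : ℕ) : ℝ :=
  ∫ x, g x * φ x ^ (2 * k + 1) ∂m

lemma integrable_mul_max_of_bounded (hg : Integrable g m) (hφ : AEStronglyMeasurable φ m)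
    (hC : ∀ x, |φ x| ≤ C) (hQ : 0 ≤ Q) :
    Integrable (fun x => g x * φ x * max (φ x ^ 2 - Q) 0) m := by
  refine (hg.mul_bdd hφ (.of_forall hC)).mul_bdd (c := C ^ 2)
    (((hφ.pow 2).sub aestronglyMeasurable_const).sup aestronglyMeasurable_const)
    (.of_forall fun x => ?_)
  rw [norm_of_nonneg (le_max_right _ _), max_le_iff]
  exact ⟨by linarith [sq_le_sq.2 ((hC x).trans (le_abs_self C))], sq_nonneg C⟩

lemma oddMoment_succ_le (hg : Integrable g m) (hφ : AEStronglyMeasurable φ m)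
    (hC : ∀ x, |φ x| ≤ C) (hQ : 0 ≤ Q) (hcross : ∀ x, g x * φ x * (φ x ^ 2 - Q) ≤ 0) (k : ℕ) :
    oddMoment m g φ (k + 1) ≤ Q * oddMoment m g φ k +
      Q ^ k * ∫ x, g x * φ x * max (φ x ^ 2 - Q) 0 ∂m := by
  unfold oddMoment
  have pow_int := integrable_mul_pow_of_bounded hg hφ hC
  have max_int := integrable_mul_max_of_bounded hg hφ hC hQ
  rw [← integral_const_mul, ← integral_const_mul,
    ← integral_add ((pow_int _).const_mul _) (max_int.const_mul _)]
  refine integral_mono (pow_int _) (((pow_int _).const_mul _).add (max_int.const_mul _))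
    fun x => ?_
  suffices g x * φ x * (φ x ^ 2 - Q) * (φ x ^ 2) ^ k ≤
      Q ^ k * (g x * φ x * max (φ x ^ 2 - Q) 0) by
    linear_combination this
  rcases le_total (φ x ^ 2) Q with h | h
  · rw [max_eq_right (sub_nonpos.2 h), mul_zero, mul_zero]
    exact mul_nonpos_of_nonpos_of_nonneg (hcross x) (by positivity)
  · rw [max_eq_left (sub_nonneg.2 h), mul_comm (Q ^ k)]
    exact mul_le_mul_of_nonpos_left (pow_le_pow_left₀ hQ h k) (hcross x)

lemma odd_tiltIntegral (hg : Integrable g m) (hφ : AEStronglyMeasurable φ m)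
    (hC : ∀ x, |φ x| ≤ C) (heven : ∀ k, ∫ x, g x * φ x ^ (2 * k) ∂m = 0) :
    (tiltIntegral m g φ).Odd :=
  odd_of_forall_even_coeff_eq_zero (hasSum_tiltIntegral hg hφ hC) fun k => by simp [heven]

theorem zeros_tiltIntegral_eq_singleton (hg : Integrable g m) (hφ : AEStronglyMeasurable φ m)
    (hC : ∀ x, |φ x| ≤ C) (heven : ∀ k, ∫ x, g x * φ x ^ (2 * k) ∂m = 0) (hQ : 0 ≤ Q)
    (hcross : ∀ x, g x * φ x * (φ x ^ 2 - Q) ≤ 0)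
    (hfar : ∫ x, g x * φ x * max (φ x ^ 2 - Q) 0 ∂m < 0) (hslope : ∫ x, g x * φ x ∂m ≤ 0) :
    {t | tiltIntegral m g φ t = 0} = {0} := by
  have hM := oddMoment_succ_le hg hφ hC hQ hcross
  have hM0 : oddMoment m g φ 0 ≤ 0 := by simpa [oddMoment] using hslope
  have hodd_le (k : ℕ) : oddMoment m g φ k ≤ 0 :=
    nonpos_of_succ_le_of_nonpos hQ hfar.le hM k.zero_le hM0
  obtain ⟨l, hl⟩ := exists_neg_of_succ_le hQ hfar hM
  refine zeros_eq_singleton_of_odd_of_neg (odd_tiltIntegral hg hφ hC heven) fun t ht =>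
    neg_of_forall_coeff_nonpos (hasSum_tiltIntegral hg hφ hC) (fun n => ?_) (m := 2 * l + 1)
      (div_neg_of_neg_of_pos hl (by positivity)) ht
  refine div_nonpos_of_nonpos_of_nonneg ?_ (by positivity)
  obtain ⟨k, rfl | rfl⟩ := n.even_or_odd'
  · exact (heven k).le
  · exact hodd_le k

theorem ncard_zeros_tiltIntegral_eq_three (hg : Integrable g m) (hφ : AEStronglyMeasurable φ m)
    (hC : ∀ x, |φ x| ≤ C) (heven : ∀ k, ∫ x, g x * φ x ^ (2 * k) ∂m = 0) (hQ : 0 ≤ Q)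
    (hcross : ∀ x, g x * φ x * (φ x ^ 2 - Q) ≤ 0)
    (hfar : ∫ x, g x * φ x * max (φ x ^ 2 - Q) 0 ∂m < 0) (hslope : 0 < ∫ x, g x * φ x ∂m) :
    {t | tiltIntegral m g φ t = 0}.ncard = 3 := by
  have hM := oddMoment_succ_le hg hφ hC hQ hcross
  have hM0 : 0 < oddMoment m g φ 0 := by simpa [oddMoment] using hslope
  obtain ⟨l, hl⟩ := exists_neg_of_succ_le hQ hfar hM
  obtain ⟨k, hk, hpos⟩ : ∃ k, oddMoment m g φ k ≤ 0 ∧ ∀ i < k, 0 < oddMoment m g φ i := by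
    classical
    have hex : ∃ k, oddMoment m g φ k ≤ 0 := ⟨l, hl.le⟩
    exact ⟨Nat.find hex, Nat.find_spec hex, fun i hi => not_le.1 (Nat.find_min hex hi)⟩
  have hneg {i : ℕ} (hi : k ≤ i) : oddMoment m g φ i ≤ 0 :=
    nonpos_of_succ_le_of_nonpos hQ hfar.le hM hi hk
  have hkl : k ≤ l := by by_contra! h; exact (hpos l h).not_gt hl
  have hk0 : 0 < k := Nat.pos_of_ne_zero (by rintro rfl; exact hk.not_gt hM0)
  refine ncard_zeros_eq_three_of_odd (odd_tiltIntegral hg hφ hC heven) <|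
    existsUnique_pos_zero_of_one_sign_change (hasSum_tiltIntegral hg hφ hC) (N := 2 * k)
      (fun n hn => div_nonneg ?_ (by positivity))
      (fun n hn => div_nonpos_of_nonpos_of_nonneg ?_ (by positivity))
      (j := 2 * 0 + 1) (by lia) (div_pos hM0 (by positivity))
      (m := 2 * l + 1) (by lia) (div_neg_of_neg_of_pos hl (by positivity))
  all_goals obtain ⟨i, rfl | rfl⟩ := n.even_or_odd'
  · exact (heven i).ge
  · exact (hpos i (by lia)).le
  · exact (heven i).le
  · exact hneg (by lia)

end SingleCrossing

section CubicDrift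

lemma integral_eq_zero_of_odd {f : ℝ → ℝ} (hf : f.Odd) : ∫ x, f x = 0 := by
  have h : ∫ x, f x = -∫ x, f x :=
    calc ∫ x, f x = ∫ x, f (-x) := (integral_neg_eq_self f volume).symm
      _ = -∫ x, f x := by simp only [hf _, integral_neg]
  exact self_eq_neg.1 h

variable {w φ : ℝ → ℝ} {b C : ℝ}

lemma sq_le_sq_of_odd_of_monotone (hodd : φ.Odd) (hmono : Monotone φ) {x y : ℝ}
    (hxy : |x| ≤ |y|) : φ x ^ 2 ≤ φ y ^ 2 := by
  have sq_abs_arg (z : ℝ) : φ |z| ^ 2 = φ z ^ 2 := by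
    rcases abs_choice z with h | h <;> simp [h, hodd z]
  rw [← sq_abs_arg x, ← sq_abs_arg y]
  exact pow_le_pow_left₀ (hodd.map_zero ▸ hmono (abs_nonneg x)) (hmono hxy) 2

lemma mul_nonneg_of_odd_of_monotone (hodd : φ.Odd) (hmono : Monotone φ) (x : ℝ) : 0 ≤ x * φ x := by
  rcases le_total 0 x with hx | hx
  · exact mul_nonneg hx (hodd.map_zero ▸ hmono hx)
  · exact mul_nonneg_of_nonpos_of_nonpos hx (hodd.map_zero ▸ hmono hx)

-- For `b ≤ 0` the convention `√b = 0` puts the sign change at the origin.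
lemma cubic_mul_mul_sub_nonpos (hw0 : ∀ x, 0 ≤ w x) (hodd : φ.Odd) (hmono : Monotone φ)
    (b x : ℝ) : (b * x - x ^ 3) * w x * φ x * (φ x ^ 2 - φ √b ^ 2) ≤ 0 := by
  have hfactor : (b * x - x ^ 3) * w x * φ x = (b - x ^ 2) * (w x * (x * φ x)) := by ring
  have hnonneg := mul_nonneg (hw0 x) (mul_nonneg_of_odd_of_monotone hodd hmono x)
  rw [hfactor]
  rcases le_total (x ^ 2) b with h | h
  · refine mul_nonpos_of_nonneg_of_nonpos (mul_nonneg (sub_nonneg.2 h) hnonneg)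
      (sub_nonpos.2 (sq_le_sq_of_odd_of_monotone hodd hmono ?_))
    exact (abs_le_sqrt h).trans (le_abs_self _)
  · refine mul_nonpos_of_nonpos_of_nonneg
      (mul_nonpos_of_nonpos_of_nonneg (sub_nonpos.2 h) hnonneg)
      (sub_nonneg.2 (sq_le_sq_of_odd_of_monotone hodd hmono ?_))
    rw [abs_of_nonneg (sqrt_nonneg b), ← sqrt_sq_eq_abs]
    exact sqrt_le_sqrt h

lemma integral_cubic_mul_max_neg (hw : Continuous w) (hw0 : ∀ x, 0 < w x)
    (hint : Integrable fun x => (b * x - x ^ 3) * w x) (hφ : Continuous φ) (hodd : φ.Odd)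
    (hmono : StrictMono φ) (hC : ∀ x, |φ x| ≤ C) :
    ∫ x, (b * x - x ^ 3) * w x * φ x * max (φ x ^ 2 - φ √b ^ 2) 0 < 0 := by
  rw [← neg_pos, ← integral_neg]
  refine integral_pos_of_integrable_nonneg_nonzero (x := √b + 1) (by fun_prop)
    (integrable_mul_max_of_bounded hint hφ.aestronglyMeasurable hC (sq_nonneg _)).neg
    (fun x => ?_) (neg_ne_zero.2 (mul_ne_zero (mul_ne_zero (mul_ne_zero ?_ (hw0 _).ne') ?_) ?_))
  · rw [Pi.zero_apply, neg_nonneg]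
    rcases le_total (φ x ^ 2) (φ √b ^ 2) with h | h
    · rw [max_eq_right (sub_nonpos.2 h), mul_zero]
    · rw [max_eq_left (sub_nonneg.2 h)]
      exact cubic_mul_mul_sub_nonpos (fun x => (hw0 x).le) hodd hmono.monotone b x
  all_goals have hr := sqrt_nonneg b
  · have hb : b < (√b + 1) ^ 2 := (sqrt_lt' (by positivity)).1 (lt_add_one _)
    rw [show b * (√b + 1) - (√b + 1) ^ 3 = (b - (√b + 1) ^ 2) * (√b + 1) by ring]
    exact mul_ne_zero (sub_ne_zero.2 hb.ne) (by positivity)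
  all_goals have hφr : 0 ≤ φ √b := hodd.map_zero ▸ hmono.monotone hr
  all_goals have hφlt : φ √b < φ (√b + 1) := hmono (lt_add_one _)
  · exact (hφr.trans_lt hφlt).ne'
  · exact (lt_max_of_lt_left (sub_pos.2 (pow_lt_pow_left₀ hφlt hφr two_ne_zero))).ne'

lemma integral_cubic_mul_even_pow_eq_zero (hw : w.Even) (hodd : φ.Odd) (b : ℝ) (k : ℕ) :
    ∫ x, (b * x - x ^ 3) * w x * φ x ^ (2 * k) = 0 := by
  refine integral_eq_zero_of_odd fun x => ?_
  rw [hw, hodd, (even_two_mul k).neg_pow]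
  ring

theorem zeros_tiltIntegral_cubic_eq_singleton (hw : Continuous w) (hw0 : ∀ x, 0 < w x)
    (heven : w.Even) (hint : Integrable fun x => (b * x - x ^ 3) * w x) (hφ : Continuous φ)
    (hodd : φ.Odd) (hmono : StrictMono φ) (hC : ∀ x, |φ x| ≤ C)
    (hslope : ∫ x, (b * x - x ^ 3) * w x * φ x ≤ 0) :
    {t | tiltIntegral volume (fun x => (b * x - x ^ 3) * w x) φ t = 0} = {0} :=
  zeros_tiltIntegral_eq_singleton hint hφ.aestronglyMeasurable hC
    (integral_cubic_mul_even_pow_eq_zero heven hodd b) (sq_nonneg _)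
    (cubic_mul_mul_sub_nonpos (fun x => (hw0 x).le) hodd hmono.monotone b)
    (integral_cubic_mul_max_neg hw hw0 hint hφ hodd hmono hC) hslope

theorem ncard_zeros_tiltIntegral_cubic_eq_three (hw : Continuous w) (hw0 : ∀ x, 0 < w x)
    (heven : w.Even) (hint : Integrable fun x => (b * x - x ^ 3) * w x) (hφ : Continuous φ)
    (hodd : φ.Odd) (hmono : StrictMono φ) (hC : ∀ x, |φ x| ≤ C)
    (hslope : 0 < ∫ x, (b * x - x ^ 3) * w x * φ x) :
    {t | tiltIntegral volume (fun x => (b * x - x ^ 3) * w x) φ t = 0}.ncard = 3 :=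
  ncard_zeros_tiltIntegral_eq_three hint hφ.aestronglyMeasurable hC
    (integral_cubic_mul_even_pow_eq_zero heven hodd b) (sq_nonneg _)
    (cubic_mul_mul_sub_nonpos (fun x => (hw0 x).le) hodd hmono.monotone b)
    (integral_cubic_mul_max_neg hw hw0 hint hφ hodd hmono hC) hslope

end CubicDrift

section Integrability

variable {κ β : ℝ}

lemma integrable_pow_mul_one_add_sq_pow_mul_exp_neg (κ : ℝ) (hβ : 0 < β) (n j : ℕ) :
    Integrable fun x : ℝ => x ^ n * (1 + κ * x ^ 2) ^ j * exp (-β * x ^ 2) := by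
  induction j generalizing n with
  | zero =>
    have h := integrable_rpow_mul_exp_neg_mul_sq hβ (s := n)
      (neg_one_lt_zero.trans_le n.cast_nonneg)
    simpa only [rpow_natCast, pow_zero, mul_one] using h
  | succ j ih =>
    refine ((ih n).add ((ih (n + 2)).const_mul κ)).congr (.of_forall fun x => ?_)
    simp only [Pi.add_apply]
    ring

lemma integrable_pow_mul_exp_log_one_add_sq_sub_sq (α : ℝ) (hκ : 0 ≤ κ) (hβ : 0 < β) (n : ℕ) :
    Integrable fun x : ℝ => x ^ n * exp (α * log (1 + κ * x ^ 2) - β * x ^ 2) := by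
  have hone_le (x : ℝ) : 1 ≤ 1 + κ * x ^ 2 := le_add_of_nonneg_right (by positivity)
  have hcont : Continuous fun x : ℝ => x ^ n * exp (α * log (1 + κ * x ^ 2) - β * x ^ 2) := by
    fun_prop (disch := intro x; linarith [hone_le x])
  refine (integrable_pow_mul_one_add_sq_pow_mul_exp_neg κ hβ n ⌈α⌉₊).mono
    hcont.aestronglyMeasurable (.of_forall fun x => ?_)
  have hx : 0 < 1 + κ * x ^ 2 := one_pos.trans_le (hone_le x)
  have hpow : exp (α * log (1 + κ * x ^ 2)) ≤ (1 + κ * x ^ 2) ^ ⌈α⌉₊ := by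
    rw [← rpow_natCast (1 + κ * x ^ 2), rpow_def_of_pos hx, mul_comm α]
    gcongr
    · exact log_nonneg (hone_le x)
    · exact Nat.le_ceil α
  calc ‖x ^ n * exp (α * log (1 + κ * x ^ 2) - β * x ^ 2)‖
      = |x ^ n| * exp (α * log (1 + κ * x ^ 2)) * exp (-β * x ^ 2) := by
        rw [norm_mul, norm_eq_abs, norm_of_nonneg (exp_pos _).le, sub_eq_add_neg, exp_add,
          neg_mul, mul_assoc]
    _ ≤ |x ^ n| * (1 + κ * x ^ 2) ^ ⌈α⌉₊ * exp (-β * x ^ 2) := by gcongr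
    _ = ‖x ^ n * (1 + κ * x ^ 2) ^ ⌈α⌉₊ * exp (-β * x ^ 2)‖ := by
        rw [norm_mul, norm_mul, norm_eq_abs, norm_of_nonneg (exp_pos _).le,
          norm_of_nonneg (pow_pos hx _).le]

end Integrability

section Stationary

variable {ν σa σm a θ μ : ℝ}

/-- The antiderivative of `σa ^ 2 / (σa ^ 2 + σm ^ 2 * x ^ 2)` vanishing at `0`, along which the
mean-field force tilts the stationary density; see `rho0_eq_rho0_zero_mul_exp`. -/
noncomputable def tiltFunction (σa σm x : ℝ) : ℝ := σa / σm * arctan (σm * x / σa)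

lemma odd_tiltFunction (σa σm : ℝ) : (tiltFunction σa σm).Odd := fun x => by
  simp only [tiltFunction, mul_neg, neg_div, arctan_neg]

lemma continuous_tiltFunction (σa σm : ℝ) : Continuous (tiltFunction σa σm) := by
  unfold tiltFunction
  fun_prop

lemma abs_tiltFunction_le (σa σm x : ℝ) : |tiltFunction σa σm x| ≤ |σa / σm| * (π / 2) := by
  rw [tiltFunction, abs_mul]
  gcongr
  exact abs_le.2 ⟨(neg_pi_div_two_lt_arctan _).le, (arctan_lt_pi_div_two _).le⟩

lemma hasDerivAt_tiltFunction (hσa : σa ≠ 0) (hσm : σm ≠ 0) (x : ℝ) :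
    HasDerivAt (tiltFunction σa σm) (σa ^ 2 / (σa ^ 2 + σm ^ 2 * x ^ 2)) x := by
  have h := ((((hasDerivAt_id x).const_mul σm).div_const σa).arctan).const_mul (σa / σm)
  refine h.congr_deriv ?_
  have hne : σa ^ 2 + σm ^ 2 * x ^ 2 ≠ 0 := by positivity
  simp only [id_eq]
  field_simp

lemma strictMono_tiltFunction (hσa : σa ≠ 0) (hσm : σm ≠ 0) :
    StrictMono (tiltFunction σa σm) :=
  strictMono_of_hasDerivAt_pos (hasDerivAt_tiltFunction hσa hσm) fun x => by positivity

lemma rho0_pos (ν σa σm a θ μ x : ℝ) : 0 < rho0 ν σa σm a θ μ x := exp_pos _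

lemma rho0_eq_rho0_zero_mul_exp (ν σa σm a θ μ x : ℝ) :
    rho0 ν σa σm a θ μ x =
      rho0 ν σa σm a θ 0 x * exp (2 * θ / σa ^ 2 * μ * tiltFunction σa σm x) := by
  have hcoeff : 2 * θ * μ / (σa * σm) = 2 * θ / σa ^ 2 * μ * (σa / σm) := by field_simp
  rw [rho0, rho0, tiltFunction, ← exp_add, hcoeff]
  ring_nf

lemma even_rho0_zero (ν σa σm a θ : ℝ) : (rho0 ν σa σm a θ 0).Even := fun x => by
  simp only [rho0, mul_zero, zero_div, zero_mul, neg_sq]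

lemma continuous_rho0 (ν σa σm a θ μ : ℝ) : Continuous (rho0 ν σa σm a θ μ) := by
  have hne (x : ℝ) : 1 + σm ^ 2 / σa ^ 2 * x ^ 2 ≠ 0 := by positivity
  unfold rho0
  fun_prop (disch := exact hne)

lemma integrable_pow_mul_rho0 (hσm : σm ≠ 0) (ν σa a θ μ : ℝ) (n : ℕ) :
    Integrable fun x => x ^ n * rho0 ν σa σm a θ μ x := by
  have hzero : Integrable fun x => x ^ n * rho0 ν σa σm a θ 0 x := by
    refine (integrable_pow_mul_exp_log_one_add_sq_sub_sq
      ((a - θ - ν * σm ^ 2 + σa ^ 2 / σm ^ 2) / σm ^ 2) (κ := σm ^ 2 / σa ^ 2)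
      (β := 1 / σm ^ 2) (by positivity) (by positivity) n).congr (.of_forall fun x => ?_)
    simp only [rho0]
    ring_nf
  refine (integrable_mul_exp_of_bounded hzero (continuous_tiltFunction σa σm).aestronglyMeasurable
    (abs_tiltFunction_le σa σm) (2 * θ / σa ^ 2 * μ)).congr (.of_forall fun x => ?_)
  simp only [rho0_eq_rho0_zero_mul_exp ν σa σm a θ μ x, mul_assoc]

-- The zero-flux stationary Fokker–Planck equation.
lemma hasDerivAt_diffusion_mul_rho0 (hσa : σa ≠ 0) (hσm : σm ≠ 0) (ν a θ μ x : ℝ) :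
    HasDerivAt (fun x => (σa ^ 2 + σm ^ 2 * x ^ 2) * rho0 ν σa σm a θ μ x)
      (2 * ((a + (1 - ν) * σm ^ 2) * x - x ^ 3 - θ * (x - μ)) * rho0 ν σa σm a θ μ x) x := by
  have hne : 1 + σm ^ 2 / σa ^ 2 * x ^ 2 ≠ 0 := by positivity
  have hne' : σa ^ 2 + σm ^ 2 * x ^ 2 ≠ 0 := by positivity
  have hsq : HasDerivAt (fun x : ℝ => x ^ 2) (2 * x) x := by simpa using hasDerivAt_pow 2 x
  have hlog := ((hsq.const_mul (σm ^ 2 / σa ^ 2)).const_add 1).log hne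
  have harctan := (((hasDerivAt_id x).const_mul σm).div_const σa).arctan
  have hrho := (((hlog.const_mul ((a - θ - ν * σm ^ 2 + σa ^ 2 / σm ^ 2) / σm ^ 2)).add
    (harctan.const_mul (2 * θ * μ / (σa * σm)))).sub (hsq.div_const (σm ^ 2))).exp
  refine (((hsq.const_mul (σm ^ 2)).const_add (σa ^ 2)).mul hrho).congr_deriv ?_
  simp only [rho0, id_eq, Pi.add_apply, Pi.sub_apply]
  field_simp
  ring

/-- The integral of the noise-corrected drift `(a + (1 - ν) * σm ^ 2) * x - x ^ 3` against the tilts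
of the centred density `rho0 ν σa σm a θ 0`; its zeros are those of the self-consistency function
up to rescaling, see `F_eq_driftTransform_div`. -/
noncomputable def driftTransform (ν σa σm a θ : ℝ) : ℝ → ℝ :=
  tiltIntegral volume (fun x => ((a + (1 - ν) * σm ^ 2) * x - x ^ 3) * rho0 ν σa σm a θ 0 x)
    (tiltFunction σa σm)

lemma integrable_rho0 (hσm : σm ≠ 0) (ν σa a θ μ : ℝ) : Integrable (rho0 ν σa σm a θ μ) := by
  simpa using integrable_pow_mul_rho0 hσm ν σa a θ μ 0

lemma integrable_cubic_mul_rho0 (hσm : σm ≠ 0) (b ν σa a θ μ : ℝ) :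
    Integrable fun x => (b * x - x ^ 3) * rho0 ν σa σm a θ μ x := by
  refine (((integrable_pow_mul_rho0 hσm ν σa a θ μ 1).const_mul b).sub
    (integrable_pow_mul_rho0 hσm ν σa a θ μ 3)).congr (.of_forall fun x => ?_)
  simp only [Pi.sub_apply]
  ring

lemma driftTransform_mul_eq_integral (ν σa σm a θ μ : ℝ) :
    driftTransform ν σa σm a θ (2 * θ / σa ^ 2 * μ) =
      ∫ x, ((a + (1 - ν) * σm ^ 2) * x - x ^ 3) * rho0 ν σa σm a θ μ x := by
  simp only [driftTransform, tiltIntegral, rho0_eq_rho0_zero_mul_exp ν σa σm a θ μ, mul_assoc]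

lemma mul_integral_sub_mul_rho0 (hσa : σa ≠ 0) (hσm : σm ≠ 0) (ν a θ μ : ℝ) :
    θ * ∫ x, (x - μ) * rho0 ν σa σm a θ μ x =
      driftTransform ν σa σm a θ (2 * θ / σa ^ 2 * μ) := by
  have moment := integrable_pow_mul_rho0 hσm ν σa a θ μ
  have hdrift := integrable_cubic_mul_rho0 hσm (a + (1 - ν) * σm ^ 2) ν σa a θ μ
  have hforce : Integrable fun x => (x - μ) * rho0 ν σa σm a θ μ x := by
    refine ((moment 1).sub ((moment 0).const_mul μ)).congr (.of_forall fun x => ?_)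
    simp only [Pi.sub_apply]
    ring
  have hdiff : Integrable fun x => (σa ^ 2 + σm ^ 2 * x ^ 2) * rho0 ν σa σm a θ μ x := by
    refine (((moment 0).const_mul (σa ^ 2)).add ((moment 2).const_mul (σm ^ 2))).congr
      (.of_forall fun x => ?_)
    simp only [Pi.add_apply]
    ring
  have hflux : (fun x => 2 * ((a + (1 - ν) * σm ^ 2) * x - x ^ 3 - θ * (x - μ)) *
        rho0 ν σa σm a θ μ x) =
      fun x => 2 * (((a + (1 - ν) * σm ^ 2) * x - x ^ 3) * rho0 ν σa σm a θ μ x -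
        θ * ((x - μ) * rho0 ν σa σm a θ μ x)) := by
    ext x; ring
  have hparts := integral_eq_zero_of_hasDerivAt_of_integrable
    (hasDerivAt_diffusion_mul_rho0 hσa hσm ν a θ μ)
    (hflux ▸ (hdrift.sub (hforce.const_mul θ)).const_mul 2) hdiff
  rw [hflux, integral_const_mul, integral_sub hdrift (hforce.const_mul θ),
    integral_const_mul] at hparts
  rw [driftTransform_mul_eq_integral]
  linarith

lemma Z_pos (hσm : σm ≠ 0) (ν σa a θ μ : ℝ) : 0 < Z ν σa σm a θ μ :=
  integral_exp_pos (integrable_rho0 hσm ν σa a θ μ)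

lemma Z_eq_tiltIntegral (ν σa σm a θ μ : ℝ) :
    Z ν σa σm a θ μ =
      tiltIntegral volume (rho0 ν σa σm a θ 0) (tiltFunction σa σm) (2 * θ / σa ^ 2 * μ) := by
  simp only [Z, tiltIntegral, rho0_eq_rho0_zero_mul_exp ν σa σm a θ μ]

lemma F_eq_driftTransform_div (hθ : θ ≠ 0) (hσa : σa ≠ 0) (hσm : σm ≠ 0) (ν a μ : ℝ) :
    F ν σa σm a θ μ =
      driftTransform ν σa σm a θ (2 * θ / σa ^ 2 * μ) / (θ * Z ν σa σm a θ μ) := by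
  rw [← mul_integral_sub_mul_rho0 hσa hσm, mul_div_mul_left _ _ hθ, F]

lemma driftTransform_zero (ν σa σm a θ : ℝ) : driftTransform ν σa σm a θ 0 = 0 := by
  simpa [driftTransform, tiltIntegral] using integral_cubic_mul_even_pow_eq_zero
    (even_rho0_zero ν σa σm a θ) (odd_tiltFunction σa σm) (a + (1 - ν) * σm ^ 2) 0

lemma hasDerivAt_driftTransform_zero (hσm : σm ≠ 0) (ν σa a θ : ℝ) :
    HasDerivAt (driftTransform ν σa σm a θ) (∫ x, ((a + (1 - ν) * σm ^ 2) * x - x ^ 3) *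
      rho0 ν σa σm a θ 0 x * tiltFunction σa σm x) 0 :=
  hasDerivAt_tiltIntegral_zero (integrable_cubic_mul_rho0 hσm _ ν σa a θ 0)
    (continuous_tiltFunction σa σm).aestronglyMeasurable (abs_tiltFunction_le σa σm)

lemma differentiableAt_Z_zero (hσm : σm ≠ 0) (ν σa a θ : ℝ) :
    DifferentiableAt ℝ (Z ν σa σm a θ) 0 := by
  rw [funext (Z_eq_tiltIntegral ν σa σm a θ)]
  have h := hasDerivAt_tiltIntegral_zero (integrable_rho0 hσm ν σa a θ 0)
    (continuous_tiltFunction σa σm).aestronglyMeasurable (abs_tiltFunction_le σa σm)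
  exact (h.comp_of_eq 0 ((hasDerivAt_id 0).const_mul _) (mul_zero _).symm).differentiableAt

lemma Fmu'_eq (hθ : θ ≠ 0) (hσa : σa ≠ 0) (hσm : σm ≠ 0) (ν a : ℝ) :
    Fmu' ν σa σm a θ =
      2 / (σa ^ 2 * Z ν σa σm a θ 0) * deriv (driftTransform ν σa σm a θ) 0 := by
  have hZ0 := (Z_pos hσm ν σa a θ 0).ne'
  have hK := (hasDerivAt_driftTransform_zero hσm ν σa a θ).differentiableAt.hasDerivAt
  have hdrift :=
    hK.comp_of_eq 0 ((hasDerivAt_id 0).const_mul (2 * θ / σa ^ 2)) (mul_zero _).symm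
  have hF := hdrift.div ((differentiableAt_Z_zero hσm ν σa a θ).hasDerivAt.const_mul θ)
    (mul_ne_zero hθ hZ0)
  rw [Fmu', funext (F_eq_driftTransform_div hθ hσa hσm ν a)]
  refine hF.deriv.trans ?_
  simp only [Function.comp_apply, id_eq, mul_zero, driftTransform_zero, zero_mul, sub_zero]
  field_simp

lemma Fmu'_pos_iff (hθ : θ ≠ 0) (hσa : σa ≠ 0) (hσm : σm ≠ 0) (ν a : ℝ) :
    0 < Fmu' ν σa σm a θ ↔ 0 < ∫ x, ((a + (1 - ν) * σm ^ 2) * x - x ^ 3) *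
      rho0 ν σa σm a θ 0 x * tiltFunction σa σm x := by
  have hZ := Z_pos hσm ν σa a θ 0
  rw [Fmu'_eq hθ hσa hσm, (hasDerivAt_driftTransform_zero hσm ν σa a θ).deriv,
    mul_pos_iff_of_pos_left (by positivity)]

lemma zeros_F_eq_preimage (hθ : θ ≠ 0) (hσa : σa ≠ 0) (hσm : σm ≠ 0) (ν a : ℝ) :
    {μ | F ν σa σm a θ μ = 0} =
      (2 * θ / σa ^ 2 * ·) ⁻¹' {t | driftTransform ν σa σm a θ t = 0} := by
  ext μ
  simp [F_eq_driftTransform_div hθ hσa hσm, hθ, (Z_pos hσm ν σa a θ μ).ne']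

lemma zeros_F_eq_singleton (hθ : θ ≠ 0) (hσa : σa ≠ 0) (hσm : σm ≠ 0) {ν a : ℝ}
    (h : Fmu' ν σa σm a θ ≤ 0) : {μ | F ν σa σm a θ μ = 0} = {0} := by
  have hslope := not_lt.1 ((Fmu'_pos_iff hθ hσa hσm ν a).not.1 h.not_gt)
  have hzeros : {t | driftTransform ν σa σm a θ t = 0} = {0} :=
    zeros_tiltIntegral_cubic_eq_singleton (continuous_rho0 ν σa σm a θ 0)
      (rho0_pos ν σa σm a θ 0) (even_rho0_zero ν σa σm a θ)
      (integrable_cubic_mul_rho0 hσm _ ν σa a θ 0) (continuous_tiltFunction σa σm)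
      (odd_tiltFunction σa σm) (strictMono_tiltFunction hσa hσm) (abs_tiltFunction_le σa σm) hslope
  rw [zeros_F_eq_preimage hθ hσa hσm, hzeros]
  ext μ
  simp [hθ, hσa]

lemma ncard_zeros_F_eq_three (hθ : θ ≠ 0) (hσa : σa ≠ 0) (hσm : σm ≠ 0) {ν a : ℝ}
    (h : 0 < Fmu' ν σa σm a θ) : {μ | F ν σa σm a θ μ = 0}.ncard = 3 := by
  have hslope := (Fmu'_pos_iff hθ hσa hσm ν a).1 h
  have hzeros : {t | driftTransform ν σa σm a θ t = 0}.ncard = 3 :=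
    ncard_zeros_tiltIntegral_cubic_eq_three (continuous_rho0 ν σa σm a θ 0)
      (rho0_pos ν σa σm a θ 0) (even_rho0_zero ν σa σm a θ)
      (integrable_cubic_mul_rho0 hσm _ ν σa a θ 0) (continuous_tiltFunction σa σm)
      (odd_tiltFunction σa σm) (strictMono_tiltFunction hσa hσm) (abs_tiltFunction_le σa σm) hslope
  have hbij : Function.Bijective (2 * θ / σa ^ 2 * ·) := mulLeft_bijective₀ _ (by positivity)
  rw [zeros_F_eq_preimage hθ hσa hσm, ncard_preimage_of_injective_subset_range hbij.injective
    (by simp [hbij.surjective.range_eq]), hzeros]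

end Stationary

theorem stmt0_general (a θ σa σm ν : ℝ) (hθ : θ ≠ 0) (hσa : σa ≠ 0) (hσm : σm ≠ 0) :
    ({μ : ℝ | F ν σa σm a θ μ = 0} = {0} ∨ {μ : ℝ | F ν σa σm a θ μ = 0}.ncard = 3) ∧
    ({μ : ℝ | F ν σa σm a θ μ = 0}.ncard = 3 ↔ 0 < Fmu' ν σa σm a θ) ∧
    ({μ : ℝ | F ν σa σm a θ μ = 0} = {0} ↔ Fmu' ν σa σm a θ ≤ 0) := by
  rcases lt_or_ge 0 (Fmu' ν σa σm a θ) with h | h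
  · have hthree := ncard_zeros_F_eq_three hθ hσa hσm h
    have hne : {μ | F ν σa σm a θ μ = 0} ≠ {0} := fun h1 => by simp [h1] at hthree
    exact ⟨.inr hthree, iff_of_true hthree h, iff_of_false hne h.not_ge⟩
  · have hone := zeros_F_eq_singleton hθ hσa hσm h
    have hne : {μ | F ν σa σm a θ μ = 0}.ncard ≠ 3 := by simp [hone]
    exact ⟨.inl hone, iff_of_false hne h.not_gt, iff_of_true hone h⟩

/-- For a > 0, θ > 0, σa > 0, σm > 0 and ν ∈ [0,1], the equation F[μ] = 0 has
either exactly one solution (namely μ = 0) or exactly three solutions; it has exactly three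
solutions iff F'_μ[0] > 0, and exactly one solution iff F'_μ[0] ≤ 0. -/
theorem stmt0 (a θ σa σm ν : ℝ) (ha : 0 < a) (hθ : 0 < θ) (hσa : 0 < σa) (hσm : 0 < σm)
    (hν : ν ∈ Set.Icc (0 : ℝ) 1) :
    ({μ : ℝ | F ν σa σm a θ μ = 0} = {0} ∨ {μ : ℝ | F ν σa σm a θ μ = 0}.ncard = 3) ∧
    ({μ : ℝ | F ν σa σm a θ μ = 0}.ncard = 3 ↔ 0 < Fmu' ν σa σm a θ) ∧
    ({μ : ℝ | F ν σa σm a θ μ = 0} = {0} ↔ Fmu' ν σa σm a θ ≤ 0) :=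
  stmt0_general a θ σa σm ν hθ.ne' hσa.ne' hσm.ne'
end

section
/- Fix ν = 1 (Itô interpretation), k > 0, a > 0 and θ > 0. Then there exists s > 0 such that for every σa > 0 one has F'_μ(1, σa, k·σa, a, θ)[0] > 0 if and only if σa < s. In particular, along the ray σm = k·σa the system undergoes exactly one phase transition, from the stable phase (three stationary measures) to the unstable phase (one stationary measure), as σa increases. -/
/-!
Along the ray `σm = k * σa` the stationary density at `μ = 0` is `exp (t * V x) / (1 + k² x²)` with
`t = 1 / σa²`, and `μ` only tilts it by `exp (m * arctan (k * x))`, where `m` is a multiple of `μ`.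
An integration by parts turns the self-consistency equation into the vanishing of the odd function
`m ↦ ∫ x (a - x²) sinh (m arctan (k x)) dρ`. Since `sinh (m y) / sinh (m z)` decreases in `m` for
`y < z`, this function has at most one positive zero, and exactly one when its slope
`H(t) = ∫ x (a - x²) arctan (k x) dρ` at `m = 0` is positive. The sign of `F'_μ[0]` is that of
`H(t)`, so it remains to show that `H` changes sign exactly once in `t`. It is negative for small
`t` and positive for large `t`. Once nonnegative it stays positive: for `a ≤ θ` because `V`
decreases in `|x|`, so that increasing `t` favours the region `x² < a`, and for `θ ≤ a` by comparing
two values of `t` through a dilation of `x` after another integration by parts.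
-/

open MeasureTheory Real Set Filter

/-! ### Monotonicity of ratios and odd functions -/

lemma mul_sinh_lt_mul_sinh {p q : ℝ} (hp : 0 < p) (hpq : p < q) : q * sinh p < p * sinh q := by
  have hq : 0 < q := hp.trans hpq
  have hconv : StrictConvexOn ℝ (Ici (0 : ℝ)) sinh :=
    StrictMonoOn.strictConvexOn_of_deriv (convex_Ici 0) continuous_sinh.continuousOn <| by
      rw [interior_Ici, Real.deriv_sinh]
      exact cosh_strictMonoOn.mono Ioi_subset_Ici_self
  have hchord := hconv.2 (mem_Ici.2 le_rfl) (mem_Ici.2 hq.le) hq.ne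
    (sub_pos.2 ((div_lt_one hq).2 hpq)) (div_pos hp hq) (sub_add_cancel 1 _)
  simp only [smul_eq_mul, mul_zero, zero_add, sinh_zero, div_mul_cancel₀ _ hq.ne'] at hchord
  calc q * sinh p < q * (p / q * sinh q) := by gcongr
    _ = p * sinh q := by field_simp

lemma strictAntiOn_sinh_mul_div_sinh_mul {y z : ℝ} (hy : 0 < y) (hyz : y < z) :
    StrictAntiOn (fun m => sinh (m * y) / sinh (m * z)) (Ioi 0) := by
  have hpos : ∀ m ∈ Ioi (0 : ℝ), 0 < sinh (m * z) := fun m hm =>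
    sinh_pos_iff.2 (mul_pos hm (hy.trans hyz))
  have hderiv : ∀ m ∈ Ioi (0 : ℝ), HasDerivAt (fun m => sinh (m * y) / sinh (m * z))
      ((cosh (m * y) * y * sinh (m * z) - sinh (m * y) * (cosh (m * z) * z)) /
        sinh (m * z) ^ 2) m := fun m hm =>
    (hasDerivAt_mul_const y).sinh.div (hasDerivAt_mul_const z).sinh (hpos m hm).ne'
  refine strictAntiOn_of_deriv_neg (convex_Ioi 0)
    (fun m hm => (hderiv m hm).continuousAt.continuousWithinAt) fun m hm => ?_
  rw [interior_Ioi] at hm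
  rw [(hderiv m hm).deriv]
  refine div_neg_of_neg_of_pos ?_ (pow_pos (hpos m hm) 2)
  -- the numerator is `((z + y) * sinh (m * (z - y)) - (z - y) * sinh (m * (z + y))) / 2`
  have harg : m * z - m * y < m * z + m * y := by linarith [mul_pos (mem_Ioi.1 hm) hy]
  have hlt := mul_sinh_lt_mul_sinh (sub_pos.2 (mul_lt_mul_of_pos_left hyz hm)) harg
  rw [sinh_sub, sinh_add] at hlt
  refine neg_of_mul_neg_right (a := m) ?_ (mem_Ioi.1 hm).le
  linarith

lemma sinh_mul_mul_sinh_mul_lt {m₁ m₂ y z : ℝ} (hm₁ : 0 < m₁) (hm : m₁ < m₂) (hy : 0 < y)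
    (hyz : y < z) : sinh (m₂ * y) * sinh (m₁ * z) < sinh (m₁ * y) * sinh (m₂ * z) := by
  have hz : 0 < z := hy.trans hyz
  have hm₂ : 0 < m₂ := hm₁.trans hm
  exact (div_lt_div_iff₀ (sinh_pos_iff.2 (mul_pos hm₂ hz)) (sinh_pos_iff.2 (mul_pos hm₁ hz))).1
    (strictAntiOn_sinh_mul_div_sinh_mul hy hyz hm₁ hm₂ hm)

lemma monotoneOn_comp_mul_sub_mul {g g' : ℝ → ℝ} {l : ℝ} (hl : 0 ≤ l) (hl₁ : l ≤ 1)
    (hg : ∀ u, 0 ≤ u → HasDerivAt g (g' u) u) (hg' : AntitoneOn g' (Ici 0)) :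
    MonotoneOn (fun u => g (l * u) - l * g u) (Ici 0) := by
  have hderiv : ∀ u, 0 ≤ u →
      HasDerivAt (fun u => g (l * u) - l * g u) (g' (l * u) * l - l * g' u) u := fun u hu =>
    ((hg (l * u) (mul_nonneg hl hu)).comp u (hasDerivAt_const_mul l)).sub ((hg u hu).const_mul l)
  refine monotoneOn_of_deriv_nonneg (convex_Ici 0)
    (fun u hu => (hderiv u hu).continuousAt.continuousWithinAt)
    (fun u hu => (hderiv u (interior_subset hu)).differentiableAt.differentiableWithinAt)
    fun u hu => ?_
  have hu₀ : 0 ≤ u := interior_subset hu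
  rw [(hderiv u hu₀).deriv, mul_comm (g' _), ← mul_sub]
  exact mul_nonneg hl (sub_nonneg.2 (hg' (mem_Ici.2 (mul_nonneg hl hu₀)) hu₀
    (mul_le_of_le_one_left hu₀ hl₁)))

lemma abs_arctan_le_pi_div_two (y : ℝ) : |arctan y| ≤ π / 2 :=
  abs_le.2 ⟨(neg_pi_div_two_lt_arctan y).le, (arctan_lt_pi_div_two y).le⟩

lemma mul_arctan_le_arctan_mul {l u : ℝ} (hl : 0 ≤ l) (hl₁ : l ≤ 1) (hu : 0 ≤ u) :
    l * arctan u ≤ arctan (l * u) := by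
  have hmono := monotoneOn_comp_mul_sub_mul hl hl₁ (fun u _ => hasDerivAt_arctan u)
    fun u (hu : 0 ≤ u) v _ huv => one_div_le_one_div_of_le (by positivity) (by gcongr)
  simpa using hmono (mem_Ici.2 le_rfl) hu hu

lemma monotoneOn_log_one_add_mul_sub {K l : ℝ} (hK : 0 ≤ K) (hl : 0 ≤ l) (hl₁ : l ≤ 1) :
    MonotoneOn (fun u => log (1 + K * (l * u)) - l * log (1 + K * u)) (Ici 0) := by
  refine monotoneOn_comp_mul_sub_mul (g := fun u => log (1 + K * u))
    (g' := fun u => K / (1 + K * u)) hl hl₁ (fun u hu => ?_) fun u hu v _ huv => ?_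
  · exact ((hasDerivAt_const_mul K).const_add 1).log (by positivity)
  · have hu₀ : 0 ≤ u := hu
    dsimp only
    gcongr

lemma strictMonoOn_one_add_mul_div {K l : ℝ} (hK : 0 < K) (hl : 0 ≤ l) (hl₁ : l < 1) :
    StrictMonoOn (fun u => (1 + K * u) / (1 + K * (l * u))) (Ici 0) := by
  intro u hu v hv huv
  have hu₀ : 0 ≤ u := hu
  have hv₀ : 0 ≤ v := hv
  refine (div_lt_div_iff₀ (by positivity) (by positivity)).2 ?_
  nlinarith [mul_pos (mul_pos hK (sub_pos.2 hl₁)) (sub_pos.2 huv)]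

lemma exists_mul_log_le_add_mul (c : ℝ) {ε : ℝ} (hε : 0 < ε) :
    ∃ C, ∀ y, 1 ≤ y → c * log y ≤ C + ε * y := by
  refine ⟨(|c| + 1) * (-1 - log (ε / (|c| + 1))), fun y hy => ?_⟩
  have hlog : log (ε / (|c| + 1)) + log y ≤ ε / (|c| + 1) * y - 1 := by
    rw [← log_mul (by positivity) (by positivity)]
    exact log_le_sub_one_of_pos (by positivity)
  calc c * log y ≤ (|c| + 1) * log y := by
        gcongr
        · exact log_nonneg hy
        · linarith [le_abs_self c]
    _ ≤ (|c| + 1) * (ε / (|c| + 1) * y - 1 - log (ε / (|c| + 1))) := by gcongr; linarith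
    _ = (|c| + 1) * (-1 - log (ε / (|c| + 1))) + ε * y := by field_simp; ring

lemma exists_eq_zero_pos_neg_of_sign_change {f : ℝ → ℝ} (hcont : ContinuousOn f (Ioi 0))
    (hneg : ∀ x y, 0 < x → x < y → f x ≤ 0 → f y < 0)
    (hpos : ∃ x, 0 < x ∧ 0 < f x) (hnonpos : ∃ x, 0 < x ∧ f x ≤ 0) :
    ∃ s, 0 < s ∧ f s = 0 ∧ (∀ x, 0 < x → x < s → 0 < f x) ∧ ∀ x, s < x → f x < 0 := by
  obtain ⟨u, hu, hfu⟩ := hpos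
  obtain ⟨v, hv, hfv⟩ := hnonpos
  have huv : u ≤ v := by
    by_contra! hvu
    exact hfu.not_gt (hneg v u hv hvu hfv)
  obtain ⟨s, hs, hfs⟩ := intermediate_value_Icc' huv
    (hcont.mono fun x hx => hu.trans_le hx.1) ⟨hfv, hfu.le⟩
  have hs₀ : 0 < s := hu.trans_le hs.1
  refine ⟨s, hs₀, hfs, fun x hx hxs => ?_, fun x hsx => hneg s x hs₀ hsx hfs.le⟩
  by_contra! hfx
  exact (hneg x s hx hxs hfx).ne hfs

lemma ncard_zeros_eq_one_of_odd {f : ℝ → ℝ} (hf : f.Odd) (hne : ∀ x, 0 < x → f x ≠ 0) :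
    {x | f x = 0}.ncard = 1 := by
  refine ncard_eq_one.2 ⟨0, ext fun x => ⟨fun hx => ?_, fun hx => ?_⟩⟩
  · rcases lt_trichotomy x 0 with hx₀ | hx₀ | hx₀
    · exact absurd (by rw [hf x, show f x = 0 from hx, neg_zero]) (hne (-x) (neg_pos.2 hx₀))
    · exact hx₀
    · exact absurd hx (hne x hx₀)
  · rw [mem_singleton_iff.1 hx]
    exact hf.map_zero

lemma ncard_zeros_eq_three_of_odd_s2 {f : ℝ → ℝ} {s : ℝ} (hf : f.Odd) (hs : 0 < s)
    (hzero : ∀ x, 0 < x → (f x = 0 ↔ x = s)) : {x | f x = 0}.ncard = 3 := by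
  refine ncard_eq_three.2 ⟨-s, 0, s, by linarith, by linarith, by linarith, ext fun x => ?_⟩
  simp only [mem_ofPred_eq, mem_insert_iff, mem_singleton_iff]
  rcases lt_trichotomy x 0 with hx | rfl | hx
  · have hfx : f x = 0 ↔ f (-x) = 0 := by rw [hf x, neg_eq_zero]
    rw [hfx, hzero (-x) (neg_pos.2 hx), neg_eq_iff_eq_neg]
    exact ⟨Or.inl, fun h => h.resolve_right (by rintro (h | h) <;> linarith)⟩
  · simp [hf.map_zero]
  · rw [hzero x hx]
    exact ⟨fun h => .inr (.inr h), fun h => by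
      rcases h with h | h | h <;> first | exact h | linarith⟩

/-! ### Integrals against an exponential family -/

lemma integral_pos_of_const_mul_le {α : Type*} [TopologicalSpace α] [MeasurableSpace α]
    {μ : Measure α} [μ.IsOpenPosMeasure] {f g : α → ℝ} {c : ℝ} {x₀ : α} (hc : 0 ≤ c)
    (hfc : Continuous f) (hgc : Continuous g) (hf : Integrable f μ) (hg : Integrable g μ)
    (hle : ∀ x, c * f x ≤ g x) (hlt : c * f x₀ < g x₀) (hpos : 0 ≤ ∫ x, f x ∂μ) :
    0 < ∫ x, g x ∂μ := by
  have hdiff : 0 < ∫ x, g x - c * f x ∂μ :=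
    integral_pos_of_integrable_nonneg_nonzero (hgc.sub (hfc.const_mul c))
      (hg.sub (hf.const_mul c)) (fun x => sub_nonneg.2 (hle x)) (sub_pos.2 hlt).ne'
  rw [integral_sub hg (hf.const_mul c), integral_const_mul] at hdiff
  linarith [mul_nonneg hc hpos]

lemma integral_mul_exp_mul_pos_of_lt {α : Type*} [TopologicalSpace α] [MeasurableSpace α]
    {μ : Measure α} [μ.IsOpenPosMeasure] {f V : α → ℝ} {c t₁ t₂ : ℝ} {x₀ : α}
    (hfc : Continuous f) (hVc : Continuous V)
    (hf₁ : Integrable (fun x => f x * exp (t₁ * V x)) μ)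
    (hf₂ : Integrable (fun x => f x * exp (t₂ * V x)) μ)
    (hpos : ∀ x, 0 < f x → c ≤ V x) (hneg : ∀ x, f x < 0 → V x ≤ c)
    (hx₀ : f x₀ ≠ 0) (hVx₀ : V x₀ ≠ c) (ht : t₁ < t₂) (hint : 0 ≤ ∫ x, f x * exp (t₁ * V x) ∂μ) :
    0 < ∫ x, f x * exp (t₂ * V x) ∂μ := by
  have hsplit : ∀ x, f x * exp (t₂ * V x) - exp ((t₂ - t₁) * c) * (f x * exp (t₁ * V x)) =
      f x * (exp ((t₂ - t₁) * V x) - exp ((t₂ - t₁) * c)) * exp (t₁ * V x) := fun x => by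
    rw [show t₂ * V x = (t₂ - t₁) * V x + t₁ * V x by ring, exp_add]
    ring
  have hmono : ∀ {u v : ℝ}, u ≤ v → exp ((t₂ - t₁) * u) ≤ exp ((t₂ - t₁) * v) := fun huv =>
    exp_le_exp.2 (mul_le_mul_of_nonneg_left huv (sub_pos.2 ht).le)
  have hnonneg : ∀ x, 0 ≤ f x * (exp ((t₂ - t₁) * V x) - exp ((t₂ - t₁) * c)) := fun x => by
    rcases lt_trichotomy (f x) 0 with hx | hx | hx
    · exact mul_nonneg_of_nonpos_of_nonpos hx.le (sub_nonpos.2 (hmono (hneg x hx)))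
    · rw [hx, zero_mul]
    · exact mul_nonneg hx.le (sub_nonneg.2 (hmono (hpos x hx)))
  have hne : f x₀ * (exp ((t₂ - t₁) * V x₀) - exp ((t₂ - t₁) * c)) ≠ 0 :=
    mul_ne_zero hx₀ (sub_ne_zero.2 fun h =>
      hVx₀ (mul_left_cancel₀ (sub_pos.2 ht).ne' (exp_injective h)))
  refine integral_pos_of_const_mul_le (f := fun x => f x * exp (t₁ * V x)) (x₀ := x₀)
    (exp_pos ((t₂ - t₁) * c)).le (by fun_prop) (by fun_prop) hf₁ hf₂ (fun x => ?_) ?_ hint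
  · rw [← sub_nonneg, hsplit]
    exact mul_nonneg (hnonneg x) (exp_pos _).le
  · rw [← sub_pos, hsplit]
    exact mul_pos ((hnonneg x₀).lt_of_ne' hne) (exp_pos _)

lemma mul_max_mul_max_sub_le_mul_exp {y w t : ℝ} (ht : 1 ≤ t) (hneg : y < 0 → w ≤ 0) :
    t * (max y 0 * max w 0) - |y| * exp w ≤ y * exp (t * w) := by
  rcases lt_or_ge y 0 with hy | hy
  · have hw : t * w ≤ w := by nlinarith [hneg hy]
    rw [max_eq_right hy.le, abs_of_neg hy]
    nlinarith [exp_le_exp.2 hw]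
  · rw [max_eq_left hy, abs_of_nonneg hy]
    rcases le_total w 0 with hw | hw
    · rw [max_eq_right hw]
      nlinarith [mul_nonneg hy (exp_pos w).le, mul_nonneg hy (exp_pos (t * w)).le]
    · rw [max_eq_left hw]
      nlinarith [mul_nonneg hy (exp_pos w).le,
        mul_le_mul_of_nonneg_left ((lt_add_one _).le.trans (add_one_le_exp (t * w))) hy]

lemma exists_integral_mul_exp_mul_pos {α : Type*} [TopologicalSpace α] [MeasurableSpace α]
    [OpensMeasurableSpace α] {μ : Measure α} [μ.IsOpenPosMeasure] {f V : α → ℝ} {c : ℝ} {x₀ : α}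
    (hfc : Continuous f) (hVc : Continuous V)
    (hint : ∀ t, 1 ≤ t → Integrable (fun x => f x * exp (t * V x)) μ)
    (hneg : ∀ x, f x < 0 → V x ≤ c) (hx₀ : 0 < f x₀) (hVx₀ : c < V x₀) :
    ∃ t, 1 ≤ t ∧ 0 < ∫ x, f x * exp (t * V x) ∂μ := by
  have hshift : ∀ t x, exp (-t * c) * (f x * exp (t * V x)) = f x * exp (t * (V x - c)) :=
    fun t x => by
      rw [show t * (V x - c) = -t * c + t * V x by ring, exp_add]
      ring
  have hint' : ∀ t, 1 ≤ t → Integrable (fun x => f x * exp (t * (V x - c))) μ := fun t ht => by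
    simpa only [hshift] using (hint t ht).const_mul (exp (-t * c))
  have habs : Integrable (fun x => |f x| * exp (V x - c)) μ := by
    simpa only [one_mul, abs_mul, abs_exp] using (hint' 1 le_rfl).abs
  have hmax : Integrable (fun x => max (f x) 0 * max (V x - c) 0) μ := by
    refine habs.mono' (by fun_prop) (.of_forall fun x => ?_)
    rw [norm_eq_abs, abs_of_nonneg (by positivity)]
    gcongr
    · exact max_le (le_abs_self _) (abs_nonneg _)
    · exact max_le ((lt_add_one _).le.trans (add_one_le_exp _)) (exp_pos _).le
  have hmax_pos : 0 < ∫ x, max (f x) 0 * max (V x - c) 0 ∂μ :=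
    integral_pos_of_integrable_nonneg_nonzero (x := x₀) (by fun_prop) hmax
      (fun x => by positivity) (mul_pos (lt_max_of_lt_left hx₀)
        (lt_max_of_lt_left (sub_pos.2 hVx₀))).ne'
  set D := ∫ x, max (f x) 0 * max (V x - c) 0 ∂μ
  set E := ∫ x, |f x| * exp (V x - c) ∂μ
  have hE : 0 ≤ E := integral_nonneg fun x => by positivity
  have ht : 1 ≤ E / D + 1 := le_add_of_nonneg_left (div_nonneg hE hmax_pos.le)
  refine ⟨E / D + 1, ht, pos_of_mul_pos_right (a := exp (-(E / D + 1) * c)) ?_ (exp_pos _).le⟩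
  rw [← integral_const_mul]
  calc 0 < (E / D + 1) * D - E := by rw [add_mul, div_mul_cancel₀ _ hmax_pos.ne']; linarith
    _ = ∫ x, (E / D + 1) * (max (f x) 0 * max (V x - c) 0) - |f x| * exp (V x - c) ∂μ := by
        rw [integral_sub (hmax.const_mul _) habs, integral_const_mul]
    _ ≤ ∫ x, exp (-(E / D + 1) * c) * (f x * exp ((E / D + 1) * V x)) ∂μ :=
        integral_mono ((hmax.const_mul _).sub habs) ((hint _ ht).const_mul _) fun x => by
          rw [hshift]
          exact mul_max_mul_max_sub_le_mul_exp ht fun hx => sub_nonpos.2 (hneg x hx)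

lemma hasDerivAt_integral_mul_comp_mul {α : Type*} [MeasurableSpace α] {μ : Measure α}
    {f φ : α → ℝ} {G G' : ℝ → ℝ} {C : ℝ} (hf : Integrable f μ) (hφ : AEStronglyMeasurable φ μ)
    (hφC : ∀ x, |φ x| ≤ C) (hG : ∀ y, HasDerivAt G (G' y) y) (hG' : Continuous G') (m : ℝ) :
    HasDerivAt (fun m => ∫ x, f x * G (m * φ x) ∂μ) (∫ x, f x * (G' (m * φ x) * φ x) ∂μ) m := by
  have hGc : Continuous G := continuous_iff_continuousAt.2 fun y => (hG y).continuousAt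
  have hbdd : ∀ {H : ℝ → ℝ} (_ : Continuous H) (R : ℝ), ∃ B, ∀ n, |n| ≤ R → ∀ x,
      |H (n * φ x)| ≤ B := fun {H} hH R => by
    obtain ⟨B, hB⟩ := (isCompact_Icc (a := -(R * C)) (b := R * C)).exists_bound_of_continuousOn
      hH.continuousOn
    refine ⟨B, fun n hn x => hB _ (abs_le.1 ?_)⟩
    rw [abs_mul]
    exact mul_le_mul hn (hφC x) (abs_nonneg _) ((abs_nonneg n).trans hn)
  obtain ⟨B, hB⟩ := hbdd hG' (|m| + 1)
  obtain ⟨B₀, hB₀⟩ := hbdd hGc |m|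
  have hmeas : ∀ {H : ℝ → ℝ} (_ : Continuous H) (n : ℝ),
      AEStronglyMeasurable (fun x => H (n * φ x)) μ := fun hH n =>
    hH.comp_aestronglyMeasurable (hφ.const_mul n)
  refine (hasDerivAt_integral_of_dominated_loc_of_deriv_le (Metric.ball_mem_nhds m one_pos)
    (F := fun m x => f x * G (m * φ x)) (F' := fun m x => f x * (G' (m * φ x) * φ x))
    (bound := fun x => |f x| * (B * C))
    (.of_forall fun n => hf.aestronglyMeasurable.mul (hmeas hGc n))
    (hf.mul_bdd (hmeas hGc m) (.of_forall (hB₀ m le_rfl)))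
    (hf.aestronglyMeasurable.mul ((hmeas hG' m).mul hφ)) (.of_forall fun x n hn => ?_)
    (hf.abs.mul_const _) (.of_forall fun x n _ => ?_)).2
  · have hn' : |n| ≤ |m| + 1 := by
      have := (abs_sub_abs_le_abs_sub n m).trans (mem_ball_iff_norm.1 hn).le
      linarith
    rw [norm_eq_abs, abs_mul, abs_mul]
    gcongr
    · exact (abs_nonneg _).trans (hB n hn' x)
    · exact hB n hn' x
    · exact hφC x
  · exact ((hG _).comp n (hasDerivAt_mul_const (φ x))).const_mul (f x)

lemma continuousOn_integral_mul_exp_mul {α : Type*} [MeasurableSpace α] {μ : Measure α}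
    {f V : α → ℝ} {s : Set ℝ} (hs : IsOpen s)
    (hf : ∀ t ∈ s, Integrable (fun x => f x * exp (t * V x)) μ) :
    ContinuousOn (fun t => ∫ x, f x * exp (t * V x) ∂μ) s := by
  refine hs.continuousOn_iff.2 fun t ht => ?_
  obtain ⟨l, u, htlu, hlu, hsub⟩ := exists_Icc_mem_subset_of_mem_nhds (hs.mem_nhds ht)
  have hl := hf l (hsub (left_mem_Icc.2 (htlu.1.trans htlu.2)))
  have hu := hf u (hsub (right_mem_Icc.2 (htlu.1.trans htlu.2)))
  refine continuousAt_of_dominated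
    (bound := fun x => |f x * exp (l * V x)| + |f x * exp (u * V x)|) ?_ ?_ (hl.abs.add hu.abs) ?_
  · filter_upwards [hlu] with r hr using (hf r (hsub hr)).aestronglyMeasurable
  · filter_upwards [hlu] with r hr
    refine .of_forall fun x => ?_
    have hexp : exp (r * V x) ≤ exp (l * V x) + exp (u * V x) := by
      rcases le_total 0 (V x) with hV | hV
      · exact (exp_le_exp.2 (mul_le_mul_of_nonneg_right hr.2 hV)).trans
          (le_add_of_nonneg_left (exp_pos _).le)
      · exact (exp_le_exp.2 (mul_le_mul_of_nonpos_right hr.1 hV)).trans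
          (le_add_of_nonneg_right (exp_pos _).le)
    simp only [norm_eq_abs, abs_mul, abs_exp, ← mul_add]
    gcongr
  · exact .of_forall fun x => by fun_prop

/-! ### The stationary density along a ray -/

/-- The potential of the stationary density in the scale `σm = k * σa`, with `b = a - θ`: for
`ν = 1` and `μ = 0` the density is `weight k b t`, with `t = 1 / σa ^ 2`. -/
noncomputable def potential (k b x : ℝ) : ℝ :=
  (b + 1 / k ^ 2) / k ^ 2 * log (1 + k ^ 2 * x ^ 2) - x ^ 2 / k ^ 2

/-- The unnormalised symmetric stationary density at inverse noise strength `t = 1 / σa ^ 2`. -/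
noncomputable def weight (k b t x : ℝ) : ℝ := exp (t * potential k b x) / (1 + k ^ 2 * x ^ 2)

/-- The moment of the bare drift `x * (a - x ^ 2)` against the symmetric stationary density tilted
by a function `G` of the angle `arctan (k * x)`. Its values at exponentials and at the identity
give the self-consistency function and its derivative at zero. -/
noncomputable def driftMoment (k a b t : ℝ) (G : ℝ → ℝ) : ℝ :=
  ∫ x, x * (a - x ^ 2) * G (arctan (k * x)) * weight k b t x

section Model

variable {k a b t θ σ : ℝ} {G G' : ℝ → ℝ}

lemma weight_pos (k b t x : ℝ) : 0 < weight k b t x := by unfold weight; positivity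

lemma weight_neg (k b t x : ℝ) : weight k b t (-x) = weight k b t x := by
  simp [weight, potential]

@[fun_prop]
lemma continuous_potential (k b : ℝ) : Continuous (potential k b) := by
  unfold potential
  fun_prop (disch := intro x; positivity)

@[fun_prop]
lemma continuous_weight (k b t : ℝ) : Continuous (weight k b t) := by
  unfold weight
  fun_prop (disch := intro x; positivity)

lemma hasDerivAt_arctan_mul (k x : ℝ) :
    HasDerivAt (fun x => arctan (k * x)) (k / (1 + k ^ 2 * x ^ 2)) x := by
  simpa only [one_div, inv_mul_eq_div, mul_pow] using (hasDerivAt_const_mul (x := x) k).arctan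

lemma hasDerivAt_potential (hk : k ≠ 0) (b x : ℝ) :
    HasDerivAt (potential k b) (2 * x * (b - x ^ 2) / (1 + k ^ 2 * x ^ 2)) x := by
  have hpos : 0 < 1 + k ^ 2 * x ^ 2 := by positivity
  have hsq : HasDerivAt (fun x : ℝ => x ^ 2) (2 * x) x := by simpa using hasDerivAt_pow 2 x
  have hlog := ((hsq.const_mul (k ^ 2)).const_add 1).log hpos.ne'
  refine ((hlog.const_mul ((b + 1 / k ^ 2) / k ^ 2)).sub (hsq.div_const (k ^ 2))).congr_deriv ?_
  field_simp
  ring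

lemma exists_potential_le (hk : k ≠ 0) (b : ℝ) :
    ∃ C, ∀ x, potential k b x ≤ C - x ^ 2 / (2 * k ^ 2) := by
  have hε : 0 < 1 / (2 * k ^ 4) := by positivity
  obtain ⟨C, hC⟩ := exists_mul_log_le_add_mul ((b + 1 / k ^ 2) / k ^ 2) hε
  refine ⟨C + 1 / (2 * k ^ 4), fun x => ?_⟩
  have hlog := hC (1 + k ^ 2 * x ^ 2) (le_add_of_nonneg_right (by positivity))
  have hquad : 1 / (2 * k ^ 4) * (1 + k ^ 2 * x ^ 2) - x ^ 2 / k ^ 2 =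
      1 / (2 * k ^ 4) - x ^ 2 / (2 * k ^ 2) := by field_simp; ring
  unfold potential
  linarith

lemma exists_weight_le (hk : k ≠ 0) (b : ℝ) (ht : 0 ≤ t) :
    ∃ C, ∀ x, weight k b t x ≤ C * exp (-(t / (2 * k ^ 2)) * x ^ 2) := by
  obtain ⟨C, hC⟩ := exists_potential_le hk b
  refine ⟨exp (t * C), fun x => ?_⟩
  calc weight k b t x ≤ exp (t * potential k b x) :=
        div_le_self (exp_pos _).le (le_add_of_nonneg_right (by positivity))
    _ ≤ exp (t * (C - x ^ 2 / (2 * k ^ 2))) := by gcongr; exact hC x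
    _ = exp (t * C) * exp (-(t / (2 * k ^ 2)) * x ^ 2) := by rw [← exp_add]; ring_nf

lemma integrable_pow_mul_comp_arctan_mul_weight (hk : k ≠ 0) (b : ℝ) (ht : 0 < t)
    (hG : Continuous G) (n : ℕ) :
    Integrable fun x => x ^ n * G (arctan (k * x)) * weight k b t x := by
  obtain ⟨C, hC⟩ := exists_weight_le hk b ht.le
  obtain ⟨B, hB⟩ := (isCompact_Icc (a := -(π / 2)) (b := π / 2)).exists_bound_of_continuousOn
    hG.continuousOn
  have hgauss : Integrable fun x : ℝ => x ^ n * exp (-(t / (2 * k ^ 2)) * x ^ 2) := by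
    simpa only [rpow_natCast] using integrable_rpow_mul_exp_neg_mul_sq
      (b := t / (2 * k ^ 2)) (by positivity) (s := n) (neg_one_lt_zero.trans_le n.cast_nonneg)
  refine (hgauss.abs.const_mul (B * C)).mono' (by fun_prop) (.of_forall fun x => ?_)
  have hGx : |G (arctan (k * x))| ≤ B :=
    hB _ (abs_le.1 (abs_arctan_le_pi_div_two _))
  have hB₀ : 0 ≤ B := (abs_nonneg _).trans hGx
  rw [norm_eq_abs, abs_mul, abs_mul, abs_of_pos (weight_pos k b t x), abs_mul, abs_exp]
  calc |x ^ n| * |G (arctan (k * x))| * weight k b t x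
      ≤ |x ^ n| * B * (C * exp (-(t / (2 * k ^ 2)) * x ^ 2)) := by
        gcongr
        · exact (weight_pos k b t x).le
        · exact hC x
    _ = B * C * (|x ^ n| * exp (-(t / (2 * k ^ 2)) * x ^ 2)) := by ring

lemma integrable_drift_mul_comp_arctan_mul_weight (hk : k ≠ 0) (a b : ℝ) (ht : 0 < t)
    (hG : Continuous G) :
    Integrable fun x => x * (a - x ^ 2) * G (arctan (k * x)) * weight k b t x := by
  refine (((integrable_pow_mul_comp_arctan_mul_weight hk b ht hG 1).const_mul a).sub
    (integrable_pow_mul_comp_arctan_mul_weight hk b ht hG 3)).congr (.of_forall fun x => ?_)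
  simp only [Pi.sub_apply]
  ring

lemma driftMoment_const_mul (k a b t c : ℝ) (G : ℝ → ℝ) :
    driftMoment k a b t (fun y => c * G y) = c * driftMoment k a b t G := by
  rw [driftMoment, driftMoment, ← integral_const_mul]
  exact integral_congr_ae (.of_forall fun x => by ring)

lemma driftMoment_add (hk : k ≠ 0) (a b : ℝ) (ht : 0 < t) {G₁ G₂ : ℝ → ℝ}
    (hG₁ : Continuous G₁) (hG₂ : Continuous G₂) :
    driftMoment k a b t (fun y => G₁ y + G₂ y) =
      driftMoment k a b t G₁ + driftMoment k a b t G₂ := by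
  rw [driftMoment, driftMoment, driftMoment, ← integral_add
    (integrable_drift_mul_comp_arctan_mul_weight hk a b ht hG₁)
    (integrable_drift_mul_comp_arctan_mul_weight hk a b ht hG₂)]
  exact integral_congr_ae (.of_forall fun x => by ring)

lemma driftMoment_eq_zero_of_even (k a b t : ℝ) (hG : G.Even) : driftMoment k a b t G = 0 := by
  have hneg := integral_neg_eq_self
    (fun x => x * (a - x ^ 2) * G (arctan (k * x)) * weight k b t x) volume
  simp only [mul_neg, arctan_neg, hG _, weight_neg, neg_sq, neg_mul, integral_neg] at hneg
  exact self_eq_neg.1 hneg.symm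

lemma driftMoment_exp (hk : k ≠ 0) (a b : ℝ) (ht : 0 < t) (m : ℝ) :
    driftMoment k a b t (fun y => exp (m * y)) = driftMoment k a b t (fun y => sinh (m * y)) := by
  simp only [← cosh_add_sinh]
  rw [driftMoment_add hk a b ht (by fun_prop) (by fun_prop),
    driftMoment_eq_zero_of_even k a b t fun y => by simp, zero_add]

lemma two_mul_driftMoment (hk : k ≠ 0) (a b : ℝ) (ht : 0 < t) (hG : ∀ y, HasDerivAt G (G' y) y)
    (hG' : Continuous G') :
    2 * t * driftMoment k a b t G =
      ∫ x, (2 * t * (a - b) * (x * G (arctan (k * x))) - k * G' (arctan (k * x))) *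
        weight k b t x := by
  have hGc : Continuous G := continuous_iff_continuousAt.2 fun y => (hG y).continuousAt
  have hint := fun n => integrable_pow_mul_comp_arctan_mul_weight hk b ht hGc n
  have hint' := integrable_pow_mul_comp_arctan_mul_weight hk b ht hG' 0
  have hdrift := integrable_drift_mul_comp_arctan_mul_weight hk a b ht hGc
  have hderiv : ∀ x, HasDerivAt (fun x => G (arctan (k * x)) * exp (t * potential k b x))
      (2 * t * (x * (a - x ^ 2) * G (arctan (k * x)) * weight k b t x) -
        (2 * t * (a - b) * (x * G (arctan (k * x))) - k * G' (arctan (k * x))) *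
          weight k b t x) x := fun x => by
    refine (((hG _).comp x (hasDerivAt_arctan_mul k x)).mul
      ((hasDerivAt_potential hk b x).const_mul t).exp).congr_deriv ?_
    unfold weight
    dsimp only [Function.comp]
    field_simp
    ring
  have hrest : Integrable fun x => (2 * t * (a - b) * (x * G (arctan (k * x))) -
      k * G' (arctan (k * x))) * weight k b t x := by
    refine (((hint 1).const_mul (2 * t * (a - b))).sub (hint'.const_mul k)).congr
      (.of_forall fun x => ?_)
    simp only [Pi.sub_apply]
    ring
  have hboundary : Integrable fun x => G (arctan (k * x)) * exp (t * potential k b x) := by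
    refine ((hint 0).add ((hint 2).const_mul (k ^ 2))).congr (.of_forall fun x => ?_)
    simp only [Pi.add_apply, weight]
    field_simp
  have hzero := integral_eq_zero_of_hasDerivAt_of_integrable hderiv
    ((hdrift.const_mul (2 * t)).sub hrest) hboundary
  rw [integral_sub (hdrift.const_mul (2 * t)) hrest, integral_const_mul] at hzero
  exact sub_eq_zero.1 hzero

lemma rho0_ray (hk : k ≠ 0) (hσ : σ ≠ 0) (a θ μ x : ℝ) :
    rho0 1 σ (k * σ) a θ μ x =
      exp (2 * θ * μ / (k * σ ^ 2) * arctan (k * x)) * weight k (a - θ) (1 / σ ^ 2) x := by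
  have hpos : 0 < 1 + k ^ 2 * x ^ 2 := by positivity
  rw [rho0, weight, potential, mul_div_assoc', ← exp_add, show k * σ * x / σ = k * x by field_simp,
    show (k * σ) ^ 2 / σ ^ 2 = k ^ 2 by field_simp, eq_div_iff hpos.ne']
  nth_rw 2 [← exp_log hpos]
  rw [← exp_add]
  congr 1
  field_simp
  ring

lemma Z_ray (hk : k ≠ 0) (hσ : σ ≠ 0) (a θ μ : ℝ) :
    Z 1 σ (k * σ) a θ μ = ∫ x, weight k (a - θ) (1 / σ ^ 2) x *
      exp (2 * θ * μ / (k * σ ^ 2) * arctan (k * x)) := by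
  rw [Z]
  exact integral_congr_ae (.of_forall fun x => by rw [rho0_ray hk hσ, mul_comm])

lemma integrable_weight (hk : k ≠ 0) (b : ℝ) (ht : 0 < t) : Integrable (weight k b t) := by
  simpa using integrable_pow_mul_comp_arctan_mul_weight hk b ht (continuous_const (y := (1 : ℝ))) 0

lemma Z_ray_pos (hk : k ≠ 0) (hσ : σ ≠ 0) (a θ μ : ℝ) : 0 < Z 1 σ (k * σ) a θ μ := by
  rw [Z_ray hk hσ]
  refine integral_pos_of_integrable_nonneg_nonzero (x := 0) (by fun_prop) ?_
    (fun x => mul_nonneg (weight_pos _ _ _ x).le (exp_pos _).le)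
    (mul_pos (weight_pos _ _ _ 0) (exp_pos _)).ne'
  refine (integrable_pow_mul_comp_arctan_mul_weight hk (a - θ) (t := 1 / σ ^ 2) (by positivity)
    (G := fun y => exp (2 * θ * μ / (k * σ ^ 2) * y)) (by fun_prop) 0).congr
    (.of_forall fun x => ?_)
  dsimp only
  ring

lemma F_ray (hk : k ≠ 0) (hσ : σ ≠ 0) (a : ℝ) (hθ : θ ≠ 0) (μ : ℝ) :
    F 1 σ (k * σ) a θ μ =
      driftMoment k a (a - θ) (1 / σ ^ 2) (fun y => sinh (2 * θ * μ / (k * σ ^ 2) * y)) /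
        (θ * Z 1 σ (k * σ) a θ μ) := by
  have ht : 0 < 1 / σ ^ 2 := by positivity
  have hparts := two_mul_driftMoment hk a (a - θ) ht
    (fun y => (hasDerivAt_const_mul (x := y) (2 * θ * μ / (k * σ ^ 2))).exp) (by fun_prop)
  have hnum : ∀ x, (2 * (1 / σ ^ 2) * (a - (a - θ)) *
      (x * exp (2 * θ * μ / (k * σ ^ 2) * arctan (k * x))) -
        k * (exp (2 * θ * μ / (k * σ ^ 2) * arctan (k * x)) * (2 * θ * μ / (k * σ ^ 2)))) *
          weight k (a - θ) (1 / σ ^ 2) x =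
      2 * (1 / σ ^ 2) * θ * ((x - μ) * rho0 1 σ (k * σ) a θ μ x) := fun x => by
    rw [rho0_ray hk hσ]
    field_simp
    ring
  simp only [hnum] at hparts
  rw [integral_const_mul, driftMoment_exp hk a _ ht, mul_assoc _ θ (integral _ _)] at hparts
  have hcancel := mul_left_cancel₀ (by positivity : 2 * (1 / σ ^ 2) ≠ 0) hparts
  rw [F, hcancel, mul_div_mul_left _ _ hθ]

lemma hasDerivAt_driftMoment_comp_mul (hk : k ≠ 0) (a b : ℝ) (ht : 0 < t)
    (hG : ∀ y, HasDerivAt G (G' y) y) (hG' : Continuous G') (m : ℝ) :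
    HasDerivAt (fun m => driftMoment k a b t fun y => G (m * y))
      (driftMoment k a b t fun y => G' (m * y) * y) m := by
  have hint : Integrable fun x => x * (a - x ^ 2) * weight k b t x := by
    simpa using integrable_drift_mul_comp_arctan_mul_weight hk a b ht
      (continuous_const (y := (1 : ℝ)))
  simpa only [driftMoment, mul_right_comm _ (weight k b t _)] using
    hasDerivAt_integral_mul_comp_mul hint (φ := fun x => arctan (k * x)) (by fun_prop)
      (fun x => abs_arctan_le_pi_div_two _) hG hG' m

lemma Fmu'_ray (hk : k ≠ 0) (hσ : σ ≠ 0) (a : ℝ) (hθ : θ ≠ 0) :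
    Fmu' 1 σ (k * σ) a θ =
      2 / (k * σ ^ 2) * driftMoment k a (a - θ) (1 / σ ^ 2) id / Z 1 σ (k * σ) a θ 0 := by
  have ht : 0 < 1 / σ ^ 2 := by positivity
  have htilt : HasDerivAt (fun μ => 2 * θ * μ / (k * σ ^ 2)) (2 * θ / (k * σ ^ 2)) 0 :=
    (hasDerivAt_const_mul (2 * θ)).div_const _
  have hnum : HasDerivAt (fun μ => driftMoment k a (a - θ) (1 / σ ^ 2)
      fun y => sinh (2 * θ * μ / (k * σ ^ 2) * y))
      (driftMoment k a (a - θ) (1 / σ ^ 2) id * (2 * θ / (k * σ ^ 2))) 0 := by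
    have hsinh := hasDerivAt_driftMoment_comp_mul hk a (a - θ) ht hasDerivAt_sinh continuous_cosh
      (2 * θ * 0 / (k * σ ^ 2))
    refine (hsinh.comp 0 htilt).congr_deriv ?_
    simp [driftMoment]
  have hden : DifferentiableAt ℝ (fun μ => Z 1 σ (k * σ) a θ μ) 0 := by
    simp only [Z_ray hk hσ]
    exact ((hasDerivAt_integral_mul_comp_mul (integrable_weight hk (a - θ) ht)
      (φ := fun x => arctan (k * x)) (by fun_prop) (fun x => abs_arctan_le_pi_div_two _)
      hasDerivAt_exp continuous_exp _).comp 0 htilt).differentiableAt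
  have hZ := (Z_ray_pos hk hσ a θ 0).ne'
  rw [Fmu', funext (F_ray hk hσ a hθ),
    (hnum.fun_div (hden.hasDerivAt.const_mul θ) (mul_ne_zero hθ hZ)).deriv]
  simp only [mul_zero, zero_div, zero_mul, sinh_zero]
  rw [driftMoment_eq_zero_of_even k a _ _ (G := fun _ => 0) fun _ => rfl]
  generalize Z 1 σ (k * σ) a θ 0 = z at hZ
  field_simp
  ring

lemma Fmu'_ray_pos_iff (hk : 0 < k) (hσ : σ ≠ 0) (a : ℝ) (hθ : θ ≠ 0) :
    0 < Fmu' 1 σ (k * σ) a θ ↔ 0 < driftMoment k a (a - θ) (1 / σ ^ 2) id := by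
  rw [Fmu'_ray hk.ne' hσ a hθ, div_pos_iff_of_pos_right (Z_ray_pos hk.ne' hσ a θ 0),
    mul_pos_iff_of_pos_left (by positivity)]

lemma F_ray_eq_zero_iff (hk : k ≠ 0) (hσ : σ ≠ 0) (a : ℝ) (hθ : θ ≠ 0) (μ : ℝ) :
    F 1 σ (k * σ) a θ μ = 0 ↔
      driftMoment k a (a - θ) (1 / σ ^ 2) (fun y => sinh (2 * θ * μ / (k * σ ^ 2) * y)) = 0 := by
  rw [F_ray hk hσ a hθ, div_eq_zero_iff,
    or_iff_left (mul_ne_zero hθ (Z_ray_pos hk hσ a θ μ).ne')]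

/-! ### Zeros of the self-consistency function -/

lemma odd_driftMoment_sinh (k a b t : ℝ) :
    (fun m => driftMoment k a b t fun y => sinh (m * y)).Odd := fun m => by
  simp [driftMoment, integral_neg]

lemma drift_mul_comp_arctan_pos (hk : 0 < k) (hG : G.Odd)
    (hpos : ∀ y, 0 < y → y < arctan (k * √a) → 0 < G y)
    (hneg : ∀ y, arctan (k * √a) < y → G y < 0) {x : ℝ} (hx : x ≠ 0) (hxa : x ^ 2 ≠ a) :
    0 < x * (a - x ^ 2) * G (arctan (k * x)) := by
  have habs : x * G (arctan (k * x)) = |x| * G (arctan (k * |x|)) := by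
    rcases abs_choice x with h | h
    · rw [h]
    · rw [h, mul_neg, arctan_neg, hG]
      ring
  have hx₀ : 0 < |x| := abs_pos.2 hx
  rw [show x * (a - x ^ 2) * G (arctan (k * x)) = (a - x ^ 2) * (x * G (arctan (k * x))) by ring,
    habs]
  rcases hxa.lt_or_gt with hlt | hgt
  · refine mul_pos (sub_pos.2 hlt) (mul_pos hx₀ (hpos _ (arctan_pos.2 (mul_pos hk hx₀)) ?_))
    refine arctan_strictMono (mul_lt_mul_of_pos_left ?_ hk)
    rwa [lt_sqrt hx₀.le, sq_abs]
  · refine mul_pos_of_neg_of_neg (sub_neg.2 hgt) (mul_neg_of_pos_of_neg hx₀ (hneg _ ?_))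
    refine arctan_strictMono (mul_lt_mul_of_pos_left ?_ hk)
    rwa [sqrt_lt' hx₀, sq_abs]

lemma driftMoment_pos (hk : 0 < k) (ha : 0 < a) (b : ℝ) (ht : 0 < t) (hG : G.Odd)
    (hGc : Continuous G) (hpos : ∀ y, 0 < y → y < arctan (k * √a) → 0 < G y)
    (hneg : ∀ y, arctan (k * √a) < y → G y < 0) : 0 < driftMoment k a b t G := by
  have hlt : ∀ x : ℝ, x ≠ 0 → x ^ 2 ≠ a →
      0 < x * (a - x ^ 2) * G (arctan (k * x)) * weight k b t x := fun x hx hxa =>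
    mul_pos (drift_mul_comp_arctan_pos hk hG hpos hneg hx hxa) (weight_pos k b t x)
  refine integral_pos_of_integrable_nonneg_nonzero (x := √a / 2) (by fun_prop)
    (integrable_drift_mul_comp_arctan_mul_weight hk.ne' a b ht hGc) (fun x => ?_)
    (hlt _ (half_pos (sqrt_pos.2 ha)).ne' ?_).ne'
  · by_cases hx : x = 0
    · simp [hx]
    by_cases hxa : x ^ 2 = a
    · simp [hxa]
    exact (hlt x hx hxa).le
  · rw [div_pow, sq_sqrt ha.le]
    linarith

lemma driftMoment_sinh_ratio_lt (hk : 0 < k) (ha : 0 < a) (b : ℝ) (ht : 0 < t) {m₁ m₂ : ℝ}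
    (hm₁ : 0 < m₁) (hm : m₁ < m₂) :
    driftMoment k a b t (fun y => sinh (m₂ * y)) * sinh (m₁ * arctan (k * √a)) <
      driftMoment k a b t (fun y => sinh (m₁ * y)) * sinh (m₂ * arctan (k * √a)) := by
  set A := arctan (k * √a)
  have hA₀ : 0 < A := arctan_pos.2 (mul_pos hk (sqrt_pos.2 ha))
  have hpos : 0 < driftMoment k a b t fun y =>
      sinh (m₂ * A) * sinh (m₁ * y) + -sinh (m₁ * A) * sinh (m₂ * y) :=
    driftMoment_pos hk ha b ht (fun y => by simp only [mul_neg, sinh_neg]; ring) (by fun_prop)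
      (fun y hy hyA => by linarith [sinh_mul_mul_sinh_mul_lt hm₁ hm hy hyA])
      (fun y hAy => by linarith [sinh_mul_mul_sinh_mul_lt hm₁ hm hA₀ hAy])
  rw [driftMoment_add hk.ne' a b ht (by fun_prop) (by fun_prop), driftMoment_const_mul,
    driftMoment_const_mul] at hpos
  linarith

lemma driftMoment_sinh_lt (hk : 0 < k) (ha : 0 < a) (b : ℝ) (ht : 0 < t) {m : ℝ} (hm : 0 < m) :
    driftMoment k a b t (fun y => sinh (m * y)) * arctan (k * √a) <
      driftMoment k a b t id * sinh (m * arctan (k * √a)) := by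
  set A := arctan (k * √a)
  have hA₀ : 0 < A := arctan_pos.2 (mul_pos hk (sqrt_pos.2 ha))
  have hlt : ∀ {y z : ℝ}, 0 < y → y < z → z * sinh (m * y) < y * sinh (m * z) := fun hy hyz => by
    have h := mul_sinh_lt_mul_sinh (mul_pos hm hy) (mul_lt_mul_of_pos_left hyz hm)
    rw [mul_assoc, mul_assoc] at h
    exact lt_of_mul_lt_mul_left h hm.le
  have hpos : 0 < driftMoment k a b t fun y => sinh (m * A) * id y + -A * sinh (m * y) :=
    driftMoment_pos hk ha b ht (fun y => by simp only [id, mul_neg, sinh_neg]; ring)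
      (by fun_prop) (fun y hy hyA => by simp only [id]; linarith [hlt hy hyA])
      (fun y hAy => by simp only [id]; linarith [hlt hA₀ hAy])
  rw [driftMoment_add hk.ne' a b ht (by fun_prop) (by fun_prop), driftMoment_const_mul,
    driftMoment_const_mul] at hpos
  linarith

lemma exists_driftMoment_sinh_neg (hk : 0 < k) (ha : 0 < a) (b : ℝ) (ht : 0 < t) :
    ∃ m, 0 < m ∧ driftMoment k a b t (fun y => sinh (m * y)) < 0 := by
  have hexp : ∀ m x, x * (x ^ 2 - a) * weight k b t x * exp (m * arctan (k * x)) =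
      -(x * (a - x ^ 2) * exp (m * arctan (k * x)) * weight k b t x) := fun m x => by ring
  have hle : ∀ x, x * (x ^ 2 - a) * weight k b t x < 0 → arctan (k * x) ≤ arctan (k * √a) :=
    fun x hx => by
      refine arctan_strictMono.monotone (mul_le_mul_of_nonneg_left ?_ hk.le)
      by_contra! hax
      have hx₀ : 0 < x := (sqrt_nonneg a).trans_lt hax
      exact hx.not_ge (mul_nonneg (mul_nonneg hx₀.le (sub_nonneg.2 ((sqrt_lt' hx₀).1 hax).le))
        (weight_pos k b t x).le)
  have hfar : 0 < (√a + 1) * ((√a + 1) ^ 2 - a) * weight k b t (√a + 1) := by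
    have ha' := sqrt_pos.2 ha
    have hsq : 0 < (√a + 1) ^ 2 - a := by rw [add_sq, sq_sqrt ha.le]; linarith
    exact mul_pos (mul_pos (by positivity) hsq) (weight_pos k b t _)
  obtain ⟨m, hm, hpos⟩ := exists_integral_mul_exp_mul_pos (μ := volume)
    (f := fun x => x * (x ^ 2 - a) * weight k b t x) (V := fun x => arctan (k * x))
    (by fun_prop) (by fun_prop) (fun m _ => by
      simpa only [hexp] using (integrable_drift_mul_comp_arctan_mul_weight hk.ne' a b ht
        (G := fun y => exp (m * y)) (by fun_prop)).fun_neg)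
    hle hfar (arctan_strictMono (mul_lt_mul_of_pos_left (lt_add_one _) hk))
  simp only [hexp, integral_neg] at hpos
  refine ⟨m, one_pos.trans_le hm, ?_⟩
  rw [← driftMoment_exp hk.ne' a b ht]
  exact neg_pos.1 hpos

lemma exists_driftMoment_sinh_pos (hk : k ≠ 0) (a b : ℝ) (ht : 0 < t)
    (hpos : 0 < driftMoment k a b t id) :
    ∃ m, 0 < m ∧ 0 < driftMoment k a b t (fun y => sinh (m * y)) := by
  have hderiv : HasDerivAt (fun m => driftMoment k a b t fun y => sinh (m * y))
      (driftMoment k a b t id) 0 :=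
    (hasDerivAt_driftMoment_comp_mul hk a b ht hasDerivAt_sinh continuous_cosh 0).congr_deriv
      (by simp [driftMoment])
  have hsign := eventually_nhdsWithin_sign_eq_of_deriv_pos (hderiv.deriv.symm ▸ hpos)
    (odd_driftMoment_sinh k a b t).map_zero
  obtain ⟨m, hm, hm₀⟩ := ((hsign.filter_mono nhdsWithin_le_nhds).and
    (self_mem_nhdsWithin (a := (0 : ℝ)) (s := Ioi 0))).exists
  refine ⟨m, hm₀, sign_eq_one_iff.1 ?_⟩
  rw [hm, sub_zero, sign_pos hm₀]

lemma zeros_F_ray_eq (hk : k ≠ 0) (hσ : σ ≠ 0) (a : ℝ) (hθ : θ ≠ 0) :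
    {μ | F 1 σ (k * σ) a θ μ = 0} = (fun m => k * σ ^ 2 / (2 * θ) * m) ''
      {m | driftMoment k a (a - θ) (1 / σ ^ 2) (fun y => sinh (m * y)) = 0} := by
  rw [image_eq_preimage_of_inverse (g := fun μ => 2 * θ * μ / (k * σ ^ 2))
    (fun m => by field_simp) (fun μ => by field_simp)]
  exact ext fun μ => F_ray_eq_zero_iff hk hσ a hθ μ

lemma ncard_zeros_F_ray (hk : k ≠ 0) (hσ : σ ≠ 0) (a : ℝ) (hθ : θ ≠ 0) :
    {μ | F 1 σ (k * σ) a θ μ = 0}.ncard =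
      {m | driftMoment k a (a - θ) (1 / σ ^ 2) (fun y => sinh (m * y)) = 0}.ncard := by
  rw [zeros_F_ray_eq hk hσ a hθ]
  exact ncard_image_of_injective _ (mul_right_injective₀ (by positivity))

lemma ncard_zeros_driftMoment_sinh_eq_one (hk : 0 < k) (ha : 0 < a) (b : ℝ) (ht : 0 < t)
    (hnonpos : driftMoment k a b t id ≤ 0) :
    {m | driftMoment k a b t (fun y => sinh (m * y)) = 0}.ncard = 1 := by
  refine ncard_zeros_eq_one_of_odd (odd_driftMoment_sinh k a b t) fun m hm hzero => ?_
  have hA : 0 < arctan (k * √a) := arctan_pos.2 (mul_pos hk (sqrt_pos.2 ha))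
  have hlt := driftMoment_sinh_lt hk ha b ht hm
  rw [hzero, zero_mul] at hlt
  exact hlt.not_ge (mul_nonpos_of_nonpos_of_nonneg hnonpos
    (sinh_nonneg_iff.2 (mul_pos hm hA).le))

lemma ncard_zeros_driftMoment_sinh_eq_three (hk : 0 < k) (ha : 0 < a) (b : ℝ) (ht : 0 < t)
    (hpos : 0 < driftMoment k a b t id) :
    {m | driftMoment k a b t (fun y => sinh (m * y)) = 0}.ncard = 3 := by
  have hA : 0 < arctan (k * √a) := arctan_pos.2 (mul_pos hk (sqrt_pos.2 ha))
  have hneg : ∀ m₁ m₂, 0 < m₁ → m₁ < m₂ → driftMoment k a b t (fun y => sinh (m₁ * y)) ≤ 0 →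
      driftMoment k a b t (fun y => sinh (m₂ * y)) < 0 := fun m₁ m₂ hm₁ hm hle => by
    have hsinh := fun {m : ℝ} (hm : 0 < m) => sinh_pos_iff.2 (mul_pos hm hA)
    exact neg_of_mul_neg_left ((driftMoment_sinh_ratio_lt hk ha b ht hm₁ hm).trans_le
      (mul_nonpos_of_nonpos_of_nonneg hle (hsinh (hm₁.trans hm)).le)) (hsinh hm₁).le
  obtain ⟨m, hm, hneg'⟩ := exists_driftMoment_sinh_neg hk ha b ht
  obtain ⟨s, hs, hzero, hbelow, habove⟩ := exists_eq_zero_pos_neg_of_sign_change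
    (fun m _ => (hasDerivAt_driftMoment_comp_mul hk.ne' a b ht hasDerivAt_sinh continuous_cosh
      m).continuousAt.continuousWithinAt) hneg
    (exists_driftMoment_sinh_pos hk.ne' a b ht hpos) ⟨m, hm, hneg'.le⟩
  refine ncard_zeros_eq_three_of_odd_s2 (odd_driftMoment_sinh k a b t) hs fun m hm =>
    ⟨fun h => ?_, fun h => h ▸ hzero⟩
  rcases lt_trichotomy m s with hms | hms | hms
  · exact absurd h (hbelow m hm hms).ne'
  · exact hms
  · exact absurd h (habove m hms).ne

/-! ### The slope at zero as a function of the inverse noise strength -/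

lemma driftMoment_eq_integral_mul_exp (k a b t : ℝ) (G : ℝ → ℝ) :
    driftMoment k a b t G = ∫ x, x * (a - x ^ 2) * G (arctan (k * x)) / (1 + k ^ 2 * x ^ 2) *
      exp (t * potential k b x) :=
  integral_congr_ae (.of_forall fun x => by simp only [weight]; ring)

lemma integrable_drift_mul_exp (hk : k ≠ 0) (a b : ℝ) (ht : 0 < t) (hG : Continuous G) :
    Integrable fun x => x * (a - x ^ 2) * G (arctan (k * x)) / (1 + k ^ 2 * x ^ 2) *
      exp (t * potential k b x) :=
  (integrable_drift_mul_comp_arctan_mul_weight hk a b ht hG).congr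
    (.of_forall fun x => by simp only [weight]; ring)

lemma continuousOn_driftMoment (hk : k ≠ 0) (a b : ℝ) (hG : Continuous G) :
    ContinuousOn (fun t => driftMoment k a b t G) (Ioi 0) := by
  simp only [driftMoment_eq_integral_mul_exp]
  exact continuousOn_integral_mul_exp_mul isOpen_Ioi fun t ht =>
    integrable_drift_mul_exp hk a b ht hG

lemma potential_abs (k b x : ℝ) : potential k b |x| = potential k b x := by
  simp only [potential, sq_abs]

lemma strictAntiOn_potential (hk : k ≠ 0) (b : ℝ) : StrictAntiOn (potential k b) (Ici √b) := by
  refine strictAntiOn_of_deriv_neg (convex_Ici _) (continuous_potential k b).continuousOn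
    fun x hx => ?_
  rw [interior_Ici] at hx
  have hx₀ : 0 < x := (sqrt_nonneg b).trans_lt hx
  rw [(hasDerivAt_potential hk b x).deriv]
  exact div_neg_of_neg_of_pos (mul_neg_of_pos_of_neg (by positivity)
    (sub_neg.2 ((sqrt_lt' hx₀).1 hx))) (by positivity)

lemma mul_arctan_mul_nonneg (hk : 0 ≤ k) (x : ℝ) : 0 ≤ x * arctan (k * x) := by
  rcases le_total 0 x with hx | hx
  · exact mul_nonneg hx (arctan_nonneg.2 (mul_nonneg hk hx))
  · exact mul_nonneg_of_nonpos_of_nonpos hx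
      (arctan_le_zero.2 (mul_nonpos_of_nonneg_of_nonpos hk hx))

lemma sq_lt_of_drift_mul_arctan_pos (hk : 0 ≤ k) {x : ℝ}
    (hx : 0 < x * (a - x ^ 2) * id (arctan (k * x)) / (1 + k ^ 2 * x ^ 2)) : x ^ 2 < a := by
  have hw := div_nonneg (mul_arctan_mul_nonneg hk x) (by positivity : 0 ≤ 1 + k ^ 2 * x ^ 2)
  refine sub_pos.1 (pos_of_mul_pos_right (hx.trans_eq ?_) hw)
  rw [id]
  ring

lemma lt_sq_of_drift_mul_arctan_neg (hk : 0 ≤ k) {x : ℝ}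
    (hx : x * (a - x ^ 2) * id (arctan (k * x)) / (1 + k ^ 2 * x ^ 2) < 0) : a < x ^ 2 := by
  have hw := div_nonneg (mul_arctan_mul_nonneg hk x) (by positivity : 0 ≤ 1 + k ^ 2 * x ^ 2)
  refine sub_neg.1 (neg_of_mul_neg_right (lt_of_eq_of_lt ?_ hx) hw)
  rw [id]
  ring

lemma drift_mul_arctan_pos (hk : 0 < k) {x : ℝ} (hx : 0 < x) (hxa : x ^ 2 < a) :
    0 < x * (a - x ^ 2) * id (arctan (k * x)) / (1 + k ^ 2 * x ^ 2) :=
  div_pos (mul_pos (mul_pos hx (sub_pos.2 hxa)) (arctan_pos.2 (mul_pos hk hx))) (by positivity)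

lemma potential_lt_of_sq_lt_sq (hk : k ≠ 0) {b x y : ℝ} (hby : b ≤ y ^ 2) (hyx : y ^ 2 < x ^ 2) :
    potential k b x < potential k b y := by
  rw [← potential_abs k b x, ← potential_abs k b y]
  have hy : √b ≤ |y| := sqrt_le_iff.2 ⟨abs_nonneg y, by rwa [sq_abs]⟩
  have hlt : |y| < |x| := sq_lt_sq.1 hyx
  exact strictAntiOn_potential hk b hy (hy.trans hlt.le) hlt

lemma exists_driftMoment_id_pos (hk : 0 < k) (ha : 0 < a) {b : ℝ} (hba : b < a) :
    ∃ t, 0 < t ∧ 0 < driftMoment k a b t id := by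
  simp only [driftMoment_eq_integral_mul_exp]
  obtain ⟨u, hu, hua⟩ := exists_between (max_lt hba ha)
  have hu₀ : 0 < u := (le_max_right _ _).trans_lt hu
  obtain ⟨t, ht, hpos⟩ := exists_integral_mul_exp_mul_pos (μ := volume) (V := potential k b)
    (f := fun x => x * (a - x ^ 2) * id (arctan (k * x)) / (1 + k ^ 2 * x ^ 2))
    (c := potential k b √a) (x₀ := √u)
    (by fun_prop (disch := intro x; positivity)) (by fun_prop)
    (fun t ht => integrable_drift_mul_exp hk.ne' a b (one_pos.trans_le ht) continuous_id)
    (fun x hx => (potential_lt_of_sq_lt_sq hk.ne' (by rw [sq_sqrt ha.le]; exact hba.le)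
      (by rw [sq_sqrt ha.le]; exact lt_sq_of_drift_mul_arctan_neg hk.le hx)).le)
    (drift_mul_arctan_pos hk (sqrt_pos.2 hu₀) (by rwa [sq_sqrt hu₀.le]))
    (potential_lt_of_sq_lt_sq hk.ne' (by rw [sq_sqrt hu₀.le]; exact (le_max_left _ _).trans hu.le)
      (by rwa [sq_sqrt hu₀.le, sq_sqrt ha.le]))
  exact ⟨t, one_pos.trans_le ht, hpos⟩

lemma driftMoment_id_pos_of_lt_of_nonpos (hk : 0 < k) (ha : 0 < a) {b t₁ t₂ : ℝ} (hb : b ≤ 0)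
    (ht₁ : 0 < t₁) (ht : t₁ < t₂) (hpos : 0 ≤ driftMoment k a b t₁ id) :
    0 < driftMoment k a b t₂ id := by
  simp only [driftMoment_eq_integral_mul_exp] at hpos ⊢
  obtain ⟨u, hu, hua⟩ := exists_between ha
  have hsq : √a ^ 2 = a := sq_sqrt ha.le
  refine integral_mul_exp_mul_pos_of_lt (c := potential k b √a) (x₀ := √u)
    (by fun_prop (disch := intro x; positivity)) (by fun_prop)
    (integrable_drift_mul_exp hk.ne' a b ht₁ continuous_id)
    (integrable_drift_mul_exp hk.ne' a b (ht₁.trans ht) continuous_id)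
    (fun x hx => (potential_lt_of_sq_lt_sq hk.ne' (hb.trans (sq_nonneg x)) ?_).le)
    (fun x hx => (potential_lt_of_sq_lt_sq hk.ne' (hb.trans (sq_nonneg _)) ?_).le)
    (drift_mul_arctan_pos hk (sqrt_pos.2 hu) ?_).ne'
    (potential_lt_of_sq_lt_sq hk.ne' (hb.trans (sq_nonneg _)) ?_).ne' ht hpos
  · rw [hsq]
    exact sq_lt_of_drift_mul_arctan_pos hk.le hx
  · rw [hsq]
    exact lt_sq_of_drift_mul_arctan_neg hk.le hx
  · rwa [sq_sqrt hu.le]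
  · rwa [sq_sqrt hu.le, hsq]

lemma strictMonoOn_mul_arctan_mul (hk : 0 < k) :
    StrictMonoOn (fun x => x * arctan (k * x)) (Ici 0) := fun _ hx _ _ hxy =>
  mul_lt_mul' hxy.le (arctan_strictMono (mul_lt_mul_of_pos_left hxy hk))
    (arctan_nonneg.2 (mul_nonneg hk.le hx)) (lt_of_le_of_lt hx hxy)

lemma exists_mul_arctan_mul_eq (hk : 0 < k) {c : ℝ} (hc : 0 < c) :
    ∃ x, 0 < x ∧ x * arctan (k * x) = c := by
  have hX : 0 ≤ 1 / k + 4 * c / π := by positivity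
  have hle : c ≤ (1 / k + 4 * c / π) * arctan (k * (1 / k + 4 * c / π)) := by
    have harctan : π / 4 ≤ arctan (k * (1 / k + 4 * c / π)) := by
      rw [← arctan_one, mul_add, mul_one_div_cancel hk.ne']
      exact arctan_strictMono.monotone (le_add_of_nonneg_right (by positivity))
    calc c = 4 * c / π * (π / 4) := by field_simp
      _ ≤ (1 / k + 4 * c / π) * arctan (k * (1 / k + 4 * c / π)) := by
        gcongr
        exact le_add_of_nonneg_left (by positivity)
  obtain ⟨x, hx, hxc⟩ := intermediate_value_Icc hX
    (f := fun x => x * arctan (k * x)) (by fun_prop) ⟨by simpa using hc.le, hle⟩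
  refine ⟨x, hx.1.lt_of_ne ?_, hxc⟩
  rintro rfl
  simp only [zero_mul] at hxc
  exact hc.ne hxc

lemma weight_mul_div_weight (hk : k ≠ 0) (b t s x : ℝ) :
    weight k b t (s * x) / weight k b (s ^ 2 * t) x =
      exp (t * ((b + 1 / k ^ 2) / k ^ 2) *
          (log (1 + k ^ 2 * (s ^ 2 * x ^ 2)) - s ^ 2 * log (1 + k ^ 2 * x ^ 2))) *
        ((1 + k ^ 2 * x ^ 2) / (1 + k ^ 2 * (s ^ 2 * x ^ 2))) := by
  rw [weight, weight, div_div_div_eq, mul_comm _ (exp (s ^ 2 * t * potential k b x)),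
    mul_div_mul_comm, ← exp_sub, potential, potential, mul_pow]
  congr 2
  field_simp
  ring

lemma strictMonoOn_weight_mul_div_weight (hk : k ≠ 0) {b s : ℝ} (hb : 0 ≤ b) (ht : 0 ≤ t)
    (hs : 0 ≤ s) (hs₁ : s < 1) :
    StrictMonoOn (fun x => weight k b t (s * x) / weight k b (s ^ 2 * t) x) (Ici 0) := by
  have hs₂ : s ^ 2 < 1 := pow_lt_one₀ hs hs₁ two_ne_zero
  intro x (hx : 0 ≤ x) y _ hxy
  have hsq : x ^ 2 < y ^ 2 := pow_lt_pow_left₀ hxy hx two_ne_zero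
  have hlog := monotoneOn_log_one_add_mul_sub (sq_nonneg k) (sq_nonneg s) hs₂.le
    (mem_Ici.2 (sq_nonneg x)) (mem_Ici.2 (sq_nonneg y)) hsq.le
  have hratio := strictMonoOn_one_add_mul_div (by positivity : 0 < k ^ 2) (sq_nonneg s) hs₂
    (mem_Ici.2 (sq_nonneg x)) (mem_Ici.2 (sq_nonneg y)) hsq
  dsimp only
  rw [weight_mul_div_weight hk, weight_mul_div_weight hk]
  refine mul_lt_mul' (exp_le_exp.2 (mul_le_mul_of_nonneg_left hlog (by positivity))) hratio
    (by positivity) (exp_pos _)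

lemma two_mul_driftMoment_id (hk : k ≠ 0) (a b : ℝ) (ht : 0 < t) :
    2 * t * driftMoment k a b t id =
      ∫ x, (2 * t * (a - b) * (x * arctan (k * x)) - k) * weight k b t x := by
  simpa only [id, mul_one] using two_mul_driftMoment hk a b ht hasDerivAt_id continuous_const

lemma integrable_mul_arctan_sub_mul_weight (hk : k ≠ 0) (b c : ℝ) (ht : 0 < t) :
    Integrable fun x => (c * (x * arctan (k * x)) - k) * weight k b t x := by
  refine (((integrable_pow_mul_comp_arctan_mul_weight hk b ht continuous_id 1).const_mul c).sub
    ((integrable_weight hk b ht).const_mul k)).congr (.of_forall fun x => ?_)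
  simp only [Pi.sub_apply, id]
  ring

lemma sq_mul_mul_arctan_mul_le {s x : ℝ} (hk : 0 ≤ k) (hs : 0 ≤ s) (hs₁ : s ≤ 1) (hx : 0 ≤ x) :
    s ^ 2 * (x * arctan (k * x)) ≤ s * x * arctan (k * (s * x)) := by
  calc s ^ 2 * (x * arctan (k * x)) = s * x * (s * arctan (k * x)) := by ring
    _ ≤ s * x * arctan (s * (k * x)) := by
        gcongr
        exact mul_arctan_le_arctan_mul hs hs₁ (by positivity)
    _ = s * x * arctan (k * (s * x)) := by rw [mul_left_comm]

lemma weight_ratio_mul_le {b c s y : ℝ} (hk : 0 < k) (hb : 0 ≤ b) (ht : 0 ≤ t) (hs : 0 ≤ s)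
    (hs₁ : s < 1) (hc : 0 ≤ c) (hy : 0 ≤ y) (hcy : s ^ 2 * c * (y * arctan (k * y)) = k) (x : ℝ) :
    weight k b t (s * y) / weight k b (s ^ 2 * t) y *
        ((s ^ 2 * c * (x * arctan (k * x)) - k) * weight k b (s ^ 2 * t) x) ≤
      (c * (s * x * arctan (k * (s * x))) - k) * weight k b t (s * x) := by
  wlog hx : 0 ≤ x generalizing x
  · simpa only [mul_neg, arctan_neg, neg_mul, neg_neg, weight_neg] using
      this (-x) (neg_nonneg.2 (not_le.1 hx).le)
  have hratio := strictMonoOn_weight_mul_div_weight hk.ne' hb ht hs hs₁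
  have hsign : weight k b t (s * y) / weight k b (s ^ 2 * t) y *
        (s ^ 2 * c * (x * arctan (k * x)) - k) ≤
      weight k b t (s * x) / weight k b (s ^ 2 * t) x *
        (s ^ 2 * c * (x * arctan (k * x)) - k) := by
    rcases le_total x y with hxy | hyx
    · refine mul_le_mul_of_nonpos_right (hratio.monotoneOn hx hy hxy) (sub_nonpos.2 ?_)
      exact (mul_le_mul_of_nonneg_left ((strictMonoOn_mul_arctan_mul hk).monotoneOn hx hy hxy)
        (by positivity)).trans_eq hcy
    · refine mul_le_mul_of_nonneg_right (hratio.monotoneOn hy hx hyx) (sub_nonneg.2 ?_)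
      exact hcy.symm.trans_le (mul_le_mul_of_nonneg_left
        ((strictMonoOn_mul_arctan_mul hk).monotoneOn hy hx hyx) (by positivity))
  have hw := weight_pos k b (s ^ 2 * t) x
  have hw' := weight_pos k b t (s * x)
  calc weight k b t (s * y) / weight k b (s ^ 2 * t) y *
        ((s ^ 2 * c * (x * arctan (k * x)) - k) * weight k b (s ^ 2 * t) x)
      ≤ weight k b t (s * x) / weight k b (s ^ 2 * t) x *
          (s ^ 2 * c * (x * arctan (k * x)) - k) * weight k b (s ^ 2 * t) x := by
        rw [← mul_assoc]
        gcongr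
    _ = (c * (s ^ 2 * (x * arctan (k * x))) - k) * weight k b t (s * x) := by
        field_simp
    _ ≤ (c * (s * x * arctan (k * (s * x))) - k) * weight k b t (s * x) := by
        gcongr ?_ * _
        gcongr ?_ - _
        exact mul_le_mul_of_nonneg_left (sq_mul_mul_arctan_mul_le hk.le hs hs₁.le hx) hc

/- After `two_mul_driftMoment_id`, the dilation `x ↦ s * x` turns the moment at `t` into an integral
against the weight at `s ^ 2 * t`, with a ratio of weights that increases in `|x|`. Its value at the
zero `y` of the integrand at `s ^ 2 * t` separates the two signs. -/
lemma driftMoment_id_pos_of_lt_of_nonneg {b s : ℝ} (hk : 0 < k) (hb : 0 ≤ b) (hba : b < a)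
    (ht : 0 < t) (hs : 0 < s) (hs₁ : s < 1) (hpos : 0 ≤ driftMoment k a b (s ^ 2 * t) id) :
    0 < driftMoment k a b t id := by
  have ht' : 0 < s ^ 2 * t := by positivity
  have hc : 0 < 2 * t * (a - b) := mul_pos (by positivity) (sub_pos.2 hba)
  obtain ⟨y, hy, hyc⟩ := exists_mul_arctan_mul_eq hk
    (by positivity : 0 < k / (s ^ 2 * (2 * t * (a - b))))
  have hcy : s ^ 2 * (2 * t * (a - b)) * (y * arctan (k * y)) = k := by
    rw [hyc, mul_div_cancel₀]
    positivity
  have hratio : weight k b t (s * 0) / weight k b (s ^ 2 * t) 0 <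
      weight k b t (s * y) / weight k b (s ^ 2 * t) y :=
    strictMonoOn_weight_mul_div_weight hk.ne' hb ht.le hs.le hs₁ (mem_Ici.2 le_rfl) hy.le hy
  have hmoment := two_mul_driftMoment_id hk.ne' a b ht'
  have hdilated : 0 < ∫ x, (2 * t * (a - b) * (s * x * arctan (k * (s * x))) - k) *
      weight k b t (s * x) := by
    refine integral_pos_of_const_mul_le (x₀ := 0)
      (div_pos (weight_pos k b t (s * y)) (weight_pos k b (s ^ 2 * t) y)).le
      (by fun_prop) (by fun_prop)
      (integrable_mul_arctan_sub_mul_weight hk.ne' b (s ^ 2 * (2 * t * (a - b))) ht')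
      ((integrable_mul_arctan_sub_mul_weight hk.ne' b _ ht).comp_mul_left' hs.ne')
      (weight_ratio_mul_le hk hb ht.le hs.le hs₁ hc.le hy.le hcy) ?_ ?_
    · have hw := weight_pos k b (s ^ 2 * t) 0
      rw [div_lt_iff₀ hw] at hratio
      simp only [zero_mul, mul_zero, zero_sub] at hratio ⊢
      nlinarith
    · rw [show s ^ 2 * (2 * t * (a - b)) = 2 * (s ^ 2 * t) * (a - b) by ring, ← hmoment]
      positivity
  rw [Measure.integral_comp_mul_left
    (fun x => (2 * t * (a - b) * (x * arctan (k * x)) - k) * weight k b t x),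
    ← two_mul_driftMoment_id hk.ne' a b ht, smul_eq_mul] at hdilated
  exact pos_of_mul_pos_right (pos_of_mul_pos_right hdilated (abs_nonneg _)) (by positivity)

lemma driftMoment_id_pos_of_lt (hk : 0 < k) (ha : 0 < a) {b t₁ t₂ : ℝ} (hba : b < a)
    (ht₁ : 0 < t₁) (ht : t₁ < t₂) (hpos : 0 ≤ driftMoment k a b t₁ id) :
    0 < driftMoment k a b t₂ id := by
  have ht₂ : 0 < t₂ := ht₁.trans ht
  rcases le_total b 0 with hb | hb
  · exact driftMoment_id_pos_of_lt_of_nonpos hk ha hb ht₁ ht hpos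
  · have hsq : √(t₁ / t₂) ^ 2 * t₂ = t₁ := by
      rw [sq_sqrt (by positivity), div_mul_cancel₀ _ ht₂.ne']
    exact driftMoment_id_pos_of_lt_of_nonneg (s := √(t₁ / t₂)) hk hb hba ht₂
      (sqrt_pos.2 (by positivity)) ((sqrt_lt' one_pos).2 (by rwa [one_pow, div_lt_one ht₂]))
      (by rwa [hsq])

lemma exists_one_add_mul_exp_mul_potential_le (hk : k ≠ 0) (b : ℝ) :
    ∃ B, ∀ t ∈ Icc (0 : ℝ) 1, ∀ x, (1 + t * |x|) * exp (t * potential k b x) ≤ B := by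
  obtain ⟨C, hC⟩ := exists_potential_le hk b
  refine ⟨2 * (1 + k ^ 2) * exp |C|, fun t ht x => ?_⟩
  have ht₀ : 0 ≤ t := ht.1
  have hlin : 1 + t * |x| ≤ 2 * (1 + k ^ 2) * exp (t * (x ^ 2 / (2 * k ^ 2))) := by
    have hamgm : t * |x| ≤ 1 / 2 + k ^ 2 * (t * (x ^ 2 / (2 * k ^ 2))) := by
      have hcancel : k ^ 2 * (t * (x ^ 2 / (2 * k ^ 2))) = t * x ^ 2 / 2 := by field_simp
      rw [hcancel, ← sq_abs x]
      nlinarith [mul_nonneg ht₀ (sq_nonneg (|x| - 1)), ht.2]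
    have hv : 0 ≤ t * (x ^ 2 / (2 * k ^ 2)) := by positivity
    calc 1 + t * |x| ≤ 2 * (1 + k ^ 2) * (t * (x ^ 2 / (2 * k ^ 2)) + 1) := by
          nlinarith [mul_nonneg (sq_nonneg k) hv, sq_nonneg k]
      _ ≤ 2 * (1 + k ^ 2) * exp (t * (x ^ 2 / (2 * k ^ 2))) := by
          gcongr
          exact add_one_le_exp _
  calc (1 + t * |x|) * exp (t * potential k b x)
      ≤ 2 * (1 + k ^ 2) * exp (t * (x ^ 2 / (2 * k ^ 2))) *
          exp (t * (C - x ^ 2 / (2 * k ^ 2))) := by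
        gcongr
        exact hC x
    _ = 2 * (1 + k ^ 2) * exp (t * C) := by
        rw [mul_assoc, ← exp_add]
        ring_nf
    _ ≤ 2 * (1 + k ^ 2) * exp |C| := by
        gcongr
        calc t * C ≤ t * |C| := by gcongr; exact le_abs_self C
          _ ≤ |C| := mul_le_of_le_one_left (abs_nonneg C) ht.2

lemma integrable_inv_one_add_sq_mul_sq (hk : k ≠ 0) :
    Integrable fun x : ℝ => (1 + k ^ 2 * x ^ 2)⁻¹ := by
  simpa only [mul_pow] using integrable_inv_one_add_sq.comp_mul_left' hk

lemma abs_mul_arctan_sub_le (k c : ℝ) (ht : 0 ≤ t) (x : ℝ) :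
    |t * c * (x * arctan (k * x)) - k| ≤ (|c| * (π / 2) + |k|) * (1 + t * |x|) := by
  calc |t * c * (x * arctan (k * x)) - k| ≤ |t * c * (x * arctan (k * x))| + |k| := abs_sub _ _
    _ = |c| * |arctan (k * x)| * (t * |x|) + |k| := by
        rw [abs_mul, abs_mul, abs_mul, abs_of_nonneg ht]
        ring
    _ ≤ |c| * (π / 2) * (t * |x|) + |k| := by
        gcongr
        exact abs_arctan_le_pi_div_two _
    _ ≤ (|c| * (π / 2) + |k|) * (1 + t * |x|) := by
        have hc : 0 ≤ |c| * (π / 2) := by positivity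
        have hk : 0 ≤ |k| * (t * |x|) := by positivity
        linarith

lemma continuousWithinAt_integral_mul_arctan_sub_mul_weight (hk : k ≠ 0) (b c : ℝ) :
    ContinuousWithinAt (fun t => ∫ x, (t * c * (x * arctan (k * x)) - k) * weight k b t x)
      (Ioi 0) 0 := by
  obtain ⟨B, hB⟩ := exists_one_add_mul_exp_mul_potential_le hk b
  refine continuousWithinAt_of_dominated
    (bound := fun x => (|c| * (π / 2) + |k|) * B * (1 + k ^ 2 * x ^ 2)⁻¹)
    (.of_forall fun t => by fun_prop) ?_ ((integrable_inv_one_add_sq_mul_sq hk).const_mul _)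
    (.of_forall fun x => by unfold weight; fun_prop (disch := positivity))
  filter_upwards [Ioo_mem_nhdsGT one_pos] with t ht
  refine .of_forall fun x => ?_
  rw [norm_eq_abs, abs_mul, abs_of_pos (weight_pos k b t x)]
  calc |t * c * (x * arctan (k * x)) - k| * weight k b t x
      ≤ (|c| * (π / 2) + |k|) * (1 + t * |x|) * weight k b t x := by
        gcongr
        · exact (weight_pos k b t x).le
        · exact abs_mul_arctan_sub_le k c ht.1.le x
    _ = (|c| * (π / 2) + |k|) * ((1 + t * |x|) * exp (t * potential k b x)) *
          (1 + k ^ 2 * x ^ 2)⁻¹ := by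
        unfold weight
        ring
    _ ≤ (|c| * (π / 2) + |k|) * B * (1 + k ^ 2 * x ^ 2)⁻¹ := by
        gcongr
        exact hB t (Ioo_subset_Icc_self ht) x

lemma exists_driftMoment_id_neg (hk : 0 < k) (a b : ℝ) :
    ∃ t, 0 < t ∧ driftMoment k a b t id < 0 := by
  have hlim : ∫ x, (0 * (2 * (a - b)) * (x * arctan (k * x)) - k) * weight k b 0 x < 0 := by
    have hpos : 0 < ∫ x : ℝ, k * (1 + k ^ 2 * x ^ 2)⁻¹ :=
      integral_pos_of_integrable_nonneg_nonzero (x := 0)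
        (by fun_prop (disch := intro x; positivity))
        ((integrable_inv_one_add_sq_mul_sq hk.ne').const_mul k)
        (fun x => by positivity) (by simpa using hk.ne')
    simpa [weight, integral_neg, neg_mul] using hpos
  have hnear := (continuousWithinAt_integral_mul_arctan_sub_mul_weight hk.ne' b
    (2 * (a - b))).tendsto.eventually_lt_const hlim
  obtain ⟨t, ht, ht₀⟩ := (hnear.and self_mem_nhdsWithin).exists
  have ht₀ : 0 < t := ht₀
  refine ⟨t, ht₀, neg_of_mul_neg_right (a := 2 * t) ?_ (by positivity)⟩
  rw [two_mul_driftMoment_id hk.ne' a b ht₀, mul_comm 2 t]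
  simpa only [mul_assoc] using ht

lemma exists_driftMoment_id_pos_iff_lt (hk : 0 < k) (ha : 0 < a) {b : ℝ} (hba : b < a) :
    ∃ τ, 0 < τ ∧ ∀ t, 0 < t → (0 < driftMoment k a b t id ↔ τ < t) := by
  obtain ⟨t₁, ht₁, hneg⟩ := exists_driftMoment_id_neg hk a b
  obtain ⟨t₂, ht₂, hpos⟩ := exists_driftMoment_id_pos hk ha hba
  obtain ⟨τ, hτ, hzero, hbelow, habove⟩ := exists_eq_zero_pos_neg_of_sign_change
    (f := fun t => -driftMoment k a b t id)
    (continuousOn_driftMoment hk.ne' a b continuous_id).neg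
    (fun t t' ht htt' h => neg_neg_of_pos
      (driftMoment_id_pos_of_lt hk ha hba ht htt' (neg_nonpos.1 h)))
    ⟨t₁, ht₁, neg_pos.2 hneg⟩ ⟨t₂, ht₂, neg_nonpos.2 hpos.le⟩
  refine ⟨τ, hτ, fun t ht => ⟨fun h => ?_, fun h => neg_lt_zero.1 (habove t h)⟩⟩
  rcases lt_trichotomy t τ with htτ | rfl | htτ
  · exact absurd (neg_pos.1 (hbelow t ht htτ)) h.not_gt
  · exact absurd (neg_eq_zero.1 hzero) h.ne'
  · exact htτ

end Model

/-- With the Itô interpretation ν = 1, along any ray σm = k·σa there is a single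
critical threshold s > 0: the system is stable (F'_μ[0] > 0, three stationary measures) exactly
for σa < s, and unstable (one stationary measure) for σa > s. -/
theorem stmt2 (k a θ : ℝ) (hk : 0 < k) (ha : 0 < a) (hθ : 0 < θ) :
    ∃ s : ℝ, 0 < s ∧ ∀ σa : ℝ, 0 < σa →
      ((0 < Fmu' 1 σa (k * σa) a θ ↔ σa < s) ∧
       (σa < s → {μ : ℝ | F 1 σa (k * σa) a θ μ = 0}.ncard = 3) ∧
       (s < σa → {μ : ℝ | F 1 σa (k * σa) a θ μ = 0}.ncard = 1)) := by
  obtain ⟨τ, hτ, hpos_iff⟩ := exists_driftMoment_id_pos_iff_lt hk ha (sub_lt_self a hθ)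
  refine ⟨√(1 / τ), by positivity, fun σ hσ => ?_⟩
  have ht : 0 < 1 / σ ^ 2 := by positivity
  have hσ_lt : 0 < driftMoment k a (a - θ) (1 / σ ^ 2) id ↔ σ < √(1 / τ) := by
    rw [hpos_iff _ ht, lt_sqrt hσ.le, lt_one_div hτ (by positivity)]
  rw [Fmu'_ray_pos_iff hk hσ.ne' a hθ.ne', ncard_zeros_F_ray hk.ne' hσ.ne' a hθ.ne']
  exact ⟨hσ_lt,
    fun h => ncard_zeros_driftMoment_sinh_eq_three hk ha _ ht (hσ_lt.2 h),
    fun h => ncard_zeros_driftMoment_sinh_eq_one hk ha _ ht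
      (not_lt.1 fun hpos => h.not_gt (hσ_lt.1 hpos))⟩
end
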